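/- arXiv:2003.05577 — 2 statements merged into one kernel-verified Lean document; each statement's English description precedes it below -/
import Mathlib

section
/- Assume F is algebraically closed and q is not a root of unity, and let d ≥ 1 be an odd integer. If V is a (d+1)-dimensional irreducible representation of H_q, then there exist ε ∈ Z/4Z and nonzero elements k0,k1,k2,k3 of F with k0^2 = q^{-d-1} such that the twisted representation E(k0,k1,k2,k3)^ε is isomorphic to V. -/
/-!
By Schur's lemma each `Tᵢ + Tᵢ⁻¹` is a scalar `kᵢ + kᵢ⁻¹`, so `(Tᵢ - kᵢ)(Tᵢ - kᵢ⁻¹) = 0`; write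
`dim V = d + 1 = 2N`. If no `Tᵢ` had an eigenspace of dimension greater than `N`, all determinants
would be `1`, contradicting `det (T₀ T₁ T₂ T₃) = q⁻²ᴺ ≠ 1`. Call `Tᵢ` unbalanced if it does have
such an eigenspace.

Suppose `T₀` is unbalanced, with large `k₀`-eigenspace. One of the eigenspaces of `T₃` has
dimension at least `N`, so there is a common eigenvector `v_0` with `T₀ v_0 = k₀ v_0` and
`T₃ v_0 = k₃ v_0` after possibly inverting `k₃`. Applying `T₂` and `T₀` alternately gives
`v_0, v_1, v_2, …`, on which the relations of the algebra force the action to be that of the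
infinite-dimensional module `M(k₀, k₁, k₂, k₃)` (`chain_step`, `chainRel`). By irreducibility
`v_0, …, v_d` is a basis (`ChainRel.notMem`). Comparing leading terms in this basis bounds the
eigenspaces: those of `T₁` and `T₂` have dimension at most `N`, those of `T₀` at most `N + 1`.
In particular `T₁` and `T₂` are balanced, so going one step back along the cycle if necessary, a
twist arranges that `T₀` is unbalanced and `T₃` is balanced (`exists_unbalanced`).

Now `det T₁ = det T₂ = det T₃ = 1` and the `k₀`-eigenspace of `T₀` has dimension exactly `N + 1`,
so the determinant relation reads `k₀² = q^{-d-1}`. Finally `v_{d+1} = 0`: otherwise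
`v_{d+1}` is a common eigenvector with `T₀`-eigenvalue `k₀⁻¹ ≠ k₀`, and the leading terms of the
chain it generates bound the `k₀`-eigenspace of `T₀` by `N` (`exists_chain`). The action on
`v_0, …, v_d` is then the one defining `E(k₀, k₁, k₂, k₃)`.
-/

universe u

namespace DAHA

variable {F : Type*} [Field F]

/-- A representation of the universal DAHA `H_q` of type `(C₁∨, C₁)` on `V`:
a quadruple of invertible operators (indexed by `ZMod 4`) such that each
`Tᵢ + Tᵢ⁻¹` commutes with every `Tⱼ` and `T₀ T₁ T₂ T₃ = q⁻¹ • id`. -/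
def IsRep {V : Type*} [AddCommGroup V] [Module F V] (q : F)
    (T : ZMod 4 → Module.End F V) : Prop :=
  (∀ i, IsUnit (T i)) ∧
  (∀ i j, Commute (T i + Ring.inverse (T i)) (T j)) ∧
  (T 0 * T 1 * T 2 * T 3 = q⁻¹ • (1 : Module.End F V))

/-- Irreducibility: `V ≠ 0` and the only invariant subspaces are `⊥` and `⊤`. -/
def Irred {V : Type*} [AddCommGroup V] [Module F V]
    (T : ZMod 4 → Module.End F V) : Prop :=
  (∃ v : V, v ≠ 0) ∧
  ∀ W : Submodule F V, (∀ i, ∀ w ∈ W, T i w ∈ W) → W = ⊥ ∨ W = ⊤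

/-- Isomorphism of two operator quadruples. -/
def Iso {V : Type*} {V' : Type*} [AddCommGroup V] [Module F V]
    [AddCommGroup V'] [Module F V']
    (T : ZMod 4 → Module.End F V) (T' : ZMod 4 → Module.End F V') : Prop :=
  ∃ S : V ≃ₗ[F] V', ∀ i v, S (T i v) = T' i (S v)

/-- The twist of an operator quadruple by `ε ∈ ℤ/4ℤ`. -/
def twist {V : Type*} [AddCommGroup V] [Module F V]
    (T : ZMod 4 → Module.End F V) (ε : ZMod 4) : ZMod 4 → Module.End F V :=
  fun i => T (i + ε)

/-- The standard basis vectors `v_i` of `Fin (d+1) → F`, extended by `0` beyond index `d`. -/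
noncomputable def e (F : Type*) [Field F] (d i : ℕ) : Fin (d + 1) → F :=
  if h : i < d + 1 then Pi.single (⟨i, h⟩ : Fin (d + 1)) (1 : F) else 0

/-- The basis vectors `m_i` of `ℕ →₀ F`. -/
noncomputable def mv (F : Type*) [Field F] (i : ℕ) : ℕ →₀ F := Finsupp.single i 1

/-- The defining action of the even-dimensional module `E(k₀,k₁,k₂,k₃)` (for `d` odd)
on the basis `v_0, …, v_d` of `Fin (d+1) → F`. -/
def IsE (q k0 k1 k2 k3 : F) (d : ℕ)
    (T : ZMod 4 → Module.End F (Fin (d + 1) → F)) : Prop :=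
  (∀ i : ℕ, Even i → 2 ≤ i → i ≤ d - 1 →
    T 0 (e F d i) = (k0⁻¹ * (q ^ i)⁻¹ * (1 - q ^ i) * (1 - k0 ^ 2 * q ^ i)) • e F d (i - 1)
      + (k0 + k0⁻¹ - k0⁻¹ * (q ^ i)⁻¹) • e F d i) ∧
  (∀ i : ℕ, Odd i → i ≤ d - 2 →
    T 0 (e F d i) = (k0⁻¹ * (q ^ (i + 1))⁻¹) • (e F d i - e F d (i + 1))) ∧
  (T 0 (e F d 0) = k0 • e F d 0) ∧
  (T 0 (e F d d) = k0 • e F d d) ∧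
  (∀ i : ℕ, Even i → 2 ≤ i → i ≤ d - 1 →
    T 1 (e F d i) = (-(k1 * (1 - q ^ i) * (1 - k0 ^ 2 * q ^ i))) • e F d (i - 1)
      + k1 • e F d i + k1⁻¹ • e F d (i + 1)) ∧
  (∀ i : ℕ, Odd i → i ≤ d → T 1 (e F d i) = k1⁻¹ • e F d i) ∧
  (T 1 (e F d 0) = k1 • e F d 0 + k1⁻¹ • e F d 1) ∧
  (∀ i : ℕ, Even i → i ≤ d - 1 →
    T 2 (e F d i) = (k0⁻¹ * k1⁻¹ * k3⁻¹ * (q ^ (i + 1))⁻¹) • (e F d i - e F d (i + 1))) ∧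
  (∀ i : ℕ, Odd i → i ≤ d →
    T 2 (e F d i) = ((k0 * k1 * k3 * q ^ i)⁻¹ * (k0 * k1 * k3 * q ^ i - k2)
        * (k0 * k1 * k3 * q ^ i - k2⁻¹)) • e F d (i - 1)
      + (k2 + k2⁻¹ - k0⁻¹ * k1⁻¹ * k3⁻¹ * (q ^ i)⁻¹) • e F d i) ∧
  (∀ i : ℕ, Even i → i ≤ d - 1 → T 3 (e F d i) = k3 • e F d i) ∧
  (∀ i : ℕ, Odd i → i ≤ d - 2 →
    T 3 (e F d i) = (-(k3⁻¹ * (k0 * k1 * k3 * q ^ i - k2)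
        * (k0 * k1 * k3 * q ^ i - k2⁻¹))) • e F d (i - 1)
      + k3⁻¹ • e F d i + k3 • e F d (i + 1)) ∧
  (T 3 (e F d d) = (-(k3⁻¹ * (k0 * k1 * k3 * q ^ d - k2)
        * (k0 * k1 * k3 * q ^ d - k2⁻¹))) • e F d (d - 1)
      + k3⁻¹ • e F d d)

/-- The defining action of the odd-dimensional module `O(k₀,k₁,k₂,k₃)` (for `d` even)
on the basis `v_0, …, v_d` of `Fin (d+1) → F`. -/
def IsO (q k0 k1 k2 k3 : F) (d : ℕ)
    (T : ZMod 4 → Module.End F (Fin (d + 1) → F)) : Prop :=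
  (∀ i : ℕ, Even i → 2 ≤ i → i ≤ d →
    T 0 (e F d i) = (k0⁻¹ * (q ^ i)⁻¹ * (1 - q ^ i) * (1 - k0 ^ 2 * q ^ i)) • e F d (i - 1)
      + (k0 + k0⁻¹ - k0⁻¹ * (q ^ i)⁻¹) • e F d i) ∧
  (∀ i : ℕ, Odd i → i ≤ d - 1 →
    T 0 (e F d i) = (k0⁻¹ * (q ^ (i + 1))⁻¹) • (e F d i - e F d (i + 1))) ∧
  (T 0 (e F d 0) = k0 • e F d 0) ∧
  (∀ i : ℕ, Even i → 2 ≤ i → i ≤ d - 2 →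
    T 1 (e F d i) = (-(k1 * (1 - q ^ i) * (1 - k0 ^ 2 * q ^ i))) • e F d (i - 1)
      + k1 • e F d i + k1⁻¹ • e F d (i + 1)) ∧
  (∀ i : ℕ, Odd i → i ≤ d - 1 → T 1 (e F d i) = k1⁻¹ • e F d i) ∧
  (T 1 (e F d 0) = k1 • e F d 0 + k1⁻¹ • e F d 1) ∧
  (T 1 (e F d d) = (-(k1 * (1 - q ^ d) * (1 - k0 ^ 2 * q ^ d))) • e F d (d - 1) + k1 • e F d d) ∧
  (∀ i : ℕ, Even i → i ≤ d - 2 →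
    T 2 (e F d i) = (k2 * q ^ (d - i)) • (e F d i - e F d (i + 1))) ∧
  (∀ i : ℕ, Odd i → i ≤ d - 1 →
    T 2 (e F d i) = (-(k2 * (1 - (k2 ^ 2)⁻¹ * (q ^ (d + 1 - i))⁻¹) * (1 - q ^ (d - i + 1)))) • e F d (i - 1)
      + (k2 + k2⁻¹ - k2 * q ^ (d - i + 1)) • e F d i) ∧
  (T 2 (e F d d) = k2 • e F d d) ∧
  (∀ i : ℕ, Even i → i ≤ d → T 3 (e F d i) = k3 • e F d i) ∧
  (∀ i : ℕ, Odd i → i ≤ d - 1 →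
    T 3 (e F d i) = (-(k3⁻¹ * (1 - (k2 ^ 2)⁻¹ * (q ^ (d + 1 - i))⁻¹)
        * (1 - (q ^ (d + 1 - i))⁻¹))) • e F d (i - 1)
      + k3⁻¹ • e F d i + k3 • e F d (i + 1))

/-- The defining action of the infinite-dimensional module `M(k₀,k₁,k₂,k₃)`
on the basis `m_0, m_1, …` of `ℕ →₀ F`. -/
def IsM (q k0 k1 k2 k3 : F) (T : ZMod 4 → Module.End F (ℕ →₀ F)) : Prop :=
  (∀ i : ℕ, Even i → 2 ≤ i →
    T 0 (mv F i) = (k0⁻¹ * (q ^ i)⁻¹ * (1 - q ^ i) * (1 - k0 ^ 2 * q ^ i)) • mv F (i - 1)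
      + (k0 + k0⁻¹ - k0⁻¹ * (q ^ i)⁻¹) • mv F i) ∧
  (∀ i : ℕ, Odd i →
    T 0 (mv F i) = (k0⁻¹ * (q ^ (i + 1))⁻¹) • (mv F i - mv F (i + 1))) ∧
  (T 0 (mv F 0) = k0 • mv F 0) ∧
  (∀ i : ℕ, Even i → 2 ≤ i →
    T 1 (mv F i) = (-(k1 * (1 - q ^ i) * (1 - k0 ^ 2 * q ^ i))) • mv F (i - 1)
      + k1 • mv F i + k1⁻¹ • mv F (i + 1)) ∧
  (∀ i : ℕ, Odd i → T 1 (mv F i) = k1⁻¹ • mv F i) ∧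
  (T 1 (mv F 0) = k1 • mv F 0 + k1⁻¹ • mv F 1) ∧
  (∀ i : ℕ, Even i →
    T 2 (mv F i) = (k0⁻¹ * k1⁻¹ * k3⁻¹ * (q ^ (i + 1))⁻¹) • (mv F i - mv F (i + 1))) ∧
  (∀ i : ℕ, Odd i →
    T 2 (mv F i) = ((k0 * k1 * k3 * q ^ i)⁻¹ * (k0 * k1 * k3 * q ^ i - k2)
        * (k0 * k1 * k3 * q ^ i - k2⁻¹)) • mv F (i - 1)
      + (k2 + k2⁻¹ - k0⁻¹ * k1⁻¹ * k3⁻¹ * (q ^ i)⁻¹) • mv F i) ∧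
  (∀ i : ℕ, Even i → T 3 (mv F i) = k3 • mv F i) ∧
  (∀ i : ℕ, Odd i →
    T 3 (mv F i) = (-(k3⁻¹ * (k0 * k1 * k3 * q ^ i - k2)
        * (k0 * k1 * k3 * q ^ i - k2⁻¹))) • mv F (i - 1)
      + k3⁻¹ • mv F i + k3 • mv F (i + 1))

/-! ### Linear algebra -/

section LinearAlgebra

variable {V : Type*} [AddCommGroup V] [Module F V]

/-- The span of `v 0, …, v (i - 1)`. -/
def flag (F : Type*) [Field F] {V : Type*} [AddCommGroup V] [Module F V] (v : ℕ → V) (i : ℕ) :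
    Submodule F V :=
  Submodule.span F (v '' Set.Iio i)

lemma mem_flag (v : ℕ → V) {i j : ℕ} (h : i < j) : v i ∈ flag F v j :=
  Submodule.subset_span ⟨i, h, rfl⟩

lemma flag_mono (v : ℕ → V) {i j : ℕ} (h : i ≤ j) : flag F v i ≤ flag F v j :=
  Submodule.span_mono (Set.image_mono (Set.Iio_subset_Iio h))

lemma linInd_of_notMem_flag (v : ℕ → V) (n : ℕ) (h : ∀ i < n, v i ∉ flag F v i) :
    LinearIndependent F (fun i : Fin n => v i) := by
  induction n with
  | zero => exact linearIndependent_empty_type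
  | succ n ih =>
    rw [linearIndependent_finSucc']
    refine ⟨ih fun i hi => h i (by omega), fun hmem => h n (by omega) ?_⟩
    refine Submodule.span_mono ?_ hmem
    rintro _ ⟨i, rfl⟩
    exact ⟨i, i.2, rfl⟩

lemma finrank_flag_le (v : ℕ → V) (i : ℕ) : Module.finrank F (flag F v i) ≤ i := by
  classical
  have h : flag F v i = Submodule.span F (((Finset.range i).image v : Finset V) : Set V) := by
    simp [flag, Finset.coe_range]
  rw [h]
  exact (finrank_span_finset_le_card _).trans (Finset.card_image_le.trans (by simp))

/-- If the image of `S` contains vectors with `N` distinct leading terms with respect to an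
independent sequence `v`, then `S` has rank at least `N`. -/
lemma ker_bound [FiniteDimensional F V] (v : ℕ → V) (n : ℕ) (hv : ∀ i < n, v i ∉ flag F v i)
    (S : Module.End F V) (N : ℕ) (f : ℕ → ℕ) (hf : StrictMono f)
    (h : ∀ j < N, f j < n ∧ ∃ x : V, ∃ c : F, c ≠ 0 ∧ S x - c • v (f j) ∈ flag F v (f j)) :
    Module.finrank F (LinearMap.ker S) + N ≤ Module.finrank F V := by
  choose! hn x c hc hx using h
  have hmem : ∀ j < N, S (x j) ∈ flag F v (f j + 1) := fun j hj => by
    have h1 := flag_mono v (Nat.le_succ (f j)) (hx j hj)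
    have h2 := (flag F v (f j + 1)).smul_mem (c j) (mem_flag v (Nat.lt_succ_self (f j)))
    simpa using add_mem h1 h2
  have hnot : ∀ j < N, S (x j) ∉ flag F v (f j) := fun j hj hm => by
    have h1 : c j • v (f j) ∈ flag F v (f j) := by
      simpa using sub_mem hm (hx j hj)
    exact hv _ (hn j hj) ((Submodule.smul_mem_iff _ (hc j hj)).1 h1)
  have hli : LinearIndependent F (fun j : Fin N => S (x j)) := by
    refine linInd_of_notMem_flag (fun j => S (x j)) N fun j hj hm => hnot j hj ?_
    refine (Submodule.span_le.2 ?_) hm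
    rintro _ ⟨i, hi, rfl⟩
    exact flag_mono v (hf hi) (hmem i (lt_trans hi hj))
  have hli' : LinearIndependent F
      (fun j : Fin N => (⟨S (x j), x j, rfl⟩ : LinearMap.range S)) :=
    LinearIndependent.of_comp (LinearMap.range S).subtype hli
  have := hli'.fintype_card_le_finrank
  rw [Fintype.card_fin] at this
  have h2 := S.finrank_range_add_finrank_ker
  omega

/-- The operator `T - k`. -/
def shiftOp (T : Module.End F V) (k : F) : Module.End F V := T - k • (1 : Module.End F V)

@[simp] lemma shiftOp_apply (T : Module.End F V) (k : F) (v : V) :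
    shiftOp T k v = T v - k • v := rfl

/-- The dimension of the `k`-eigenspace of `T`. -/
noncomputable def edim (T : Module.End F V) (k : F) : ℕ :=
  Module.finrank F (LinearMap.ker (shiftOp T k))

/-- `(T - k)(T - k⁻¹) = 0`, so the image of `T - k⁻¹` lies in the `k`-eigenspace. -/
lemma edim_add [FiniteDimensional F V] (T : Module.End F V) (c k : F) (hk : k ≠ 0)
    (hc : c = k + k⁻¹) (hT : ∀ v, T (T v) = c • T v - v) :
    Module.finrank F V ≤ edim T k + edim T k⁻¹ := by
  have h2 := (shiftOp T k⁻¹).finrank_range_add_finrank_ker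
  have : LinearMap.range (shiftOp T k⁻¹) ≤ LinearMap.ker (shiftOp T k) := by
    rintro _ ⟨x, rfl⟩
    simp only [LinearMap.mem_ker, shiftOp_apply, map_sub, map_smul, hT, hc]
    match_scalars <;> field_simp <;> ring
  have := Submodule.finrank_mono this
  unfold edim
  omega

/-- `T` acts as `k` on its `k`-eigenspace and as `k⁻¹` on the quotient. -/
lemma det_eq [FiniteDimensional F V] (T : Module.End F V) (c k : F) (hk : k ≠ 0)
    (hc : c = k + k⁻¹) (hT : ∀ v, T (T v) = c • T v - v) :
    LinearMap.det T = k ^ edim T k * k⁻¹ ^ (Module.finrank F V - edim T k) := by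
  set W := LinearMap.ker (shiftOp T k) with hW
  have hmem : ∀ w, w ∈ W ↔ T w = k • w := fun w => by
    simp [hW, LinearMap.mem_ker, sub_eq_zero]
  have he : W ≤ W.comap T := fun w hw => by
    rw [Submodule.mem_comap, (hmem w).1 hw]
    exact W.smul_mem _ hw
  rw [LinearMap.det_eq_det_mul_det W T he]
  have h1 : LinearMap.restrict T he = k • (LinearMap.id : W →ₗ[F] W) := by
    ext ⟨w, hw⟩
    simpa using (hmem w).1 hw
  have h2 : W.mapQ W T he = k⁻¹ • (LinearMap.id : (V ⧸ W) →ₗ[F] (V ⧸ W)) := by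
    refine Submodule.linearMap_qext _ (LinearMap.ext fun v => ?_)
    simp only [LinearMap.comp_apply, Submodule.mkQ_apply, Submodule.mapQ_apply,
      LinearMap.smul_apply, LinearMap.id_apply]
    rw [← Submodule.Quotient.mk_smul, Submodule.Quotient.eq, hmem, map_sub, map_smul, hT, hc]
    match_scalars <;> field_simp <;> ring
  rw [h1, h2, LinearMap.det_smul, LinearMap.det_smul, LinearMap.det_id, LinearMap.det_id]
  have := W.finrank_quotient_add_finrank
  have h3 : Module.finrank F (V ⧸ W) = Module.finrank F V - edim T k := by
    unfold edim; rw [← hW]; omega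
  rw [h3, mul_one, mul_one]
  rfl

/-- Eigenspaces that have at most half of the full dimension force determinant one. -/
lemma det_eq_one [FiniteDimensional F V] (T : Module.End F V) (c k : F) (hk : k ≠ 0)
    (hc : c = k + k⁻¹) (hT : ∀ v, T (T v) = c • T v - v) (N : ℕ)
    (hN : Module.finrank F V = 2 * N) (hbal : ∀ k, edim T k ≤ N) :
    LinearMap.det T = 1 := by
  have h1 := edim_add T c k hk hc hT
  have h2 : edim T k = N := by have := hbal k; have := hbal k⁻¹; omega
  rw [det_eq T c k hk hc hT, h2, hN, two_mul, Nat.add_sub_cancel, ← mul_pow,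
    mul_inv_cancel₀ hk, one_pow]

/-- If `(T - k)(T - k⁻¹) = 0` and `T (v - w) = k (v - p)` with `T p = k⁻¹ p`, then `T` is
determined on `v` and `w`. -/
lemma quad_step (T : Module.End F V) (c k : F) (hk : k ≠ 0) (hc : c = k + k⁻¹)
    (hT : ∀ v, T (T v) = c • T v - v) (v w p : V) (hp : T p = k⁻¹ • p)
    (h : T (v - w) = k • (v - p)) :
    T v = -k • p + k • v + k⁻¹ • w ∧ T w = k⁻¹ • w := by
  have h1 : T (T (v - w)) = k • (T v - k⁻¹ • p) := by
    rw [h, map_smul, map_sub, hp]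
  rw [hT, h, hc] at h1
  have h2 : T v = -k • p + k • v + k⁻¹ • w := by
    have h4 : T v = k⁻¹ • (k • (T v - k⁻¹ • p)) + k⁻¹ • p := by
      rw [smul_smul, inv_mul_cancel₀ hk, one_smul, sub_add_cancel]
    rw [← h1] at h4
    rw [h4]
    match_scalars <;> field_simp <;> ring
  refine ⟨h2, ?_⟩
  have h5 : T w = T v - T (v - w) := by rw [map_sub]; abel
  rw [h5, h2, h]
  match_scalars <;> field_simp <;> ring

/-- The matrix of `T` on `v` and `w = v - m T v`. -/
lemma quad_step' (T : Module.End F V) (c m : F) (hm : m ≠ 0)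
    (hT : ∀ v, T (T v) = c • T v - v) (v : V) :
    T v = m⁻¹ • (v - (v - m • T v)) ∧
    T (v - m • T v) = (m⁻¹ - c + m) • v + (c - m⁻¹) • (v - m • T v) := by
  constructor
  · rw [sub_sub_cancel, smul_smul, inv_mul_cancel₀ hm, one_smul]
  · rw [map_sub, map_smul, hT]
    match_scalars <;> field_simp <;> ring

end LinearAlgebra

/-! ### The chain of vectors generated by a common eigenvector -/

section Chain

variable {V : Type*} [AddCommGroup V] [Module F V]

/-- Operators satisfying the relations of `H_q`, with each `Tᵢ + Tᵢ⁻¹` equal to the scalar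
`kᵢ + kᵢ⁻¹`. The quadratic relations are written without inverses and the product relation is
given in all its cyclic forms. -/
structure Sys (q : F) (T : ZMod 4 → Module.End F V) (k : ZMod 4 → F) : Prop where
  k_ne : ∀ i, k i ≠ 0
  sq : ∀ i v, T i (T i v) = (k i + (k i)⁻¹) • T i v - v
  prod : ∀ i v, T i (T (i + 1) (T (i + 2) (T (i + 3) v))) = q⁻¹ • v

lemma Sys.shift {q : F} {T : ZMod 4 → Module.End F V} {k : ZMod 4 → F} (h : Sys q T k)
    (a : ZMod 4) : Sys q (fun i => T (i + a)) (fun i => k (i + a)) where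
  k_ne i := h.k_ne _
  sq i v := h.sq _ v
  prod i v := by
    have := h.prod (i + a) v
    simpa only [add_right_comm] using this

lemma Sys.update {q : F} {T : ZMod 4 → Module.End F V} {k : ZMod 4 → F} (h : Sys q T k)
    (k' : ZMod 4 → F) (hk : ∀ i, k' i = k i ∨ k' i = (k i)⁻¹) : Sys q T k' where
  k_ne i := by rcases hk i with h1 | h1 <;> rw [h1] <;> simp [h.k_ne]
  sq i v := by
    rcases hk i with h1 | h1
    · rw [h1, h.sq]
    · rw [h1, h.sq, inv_inv, add_comm]
  prod := h.prod

/-- `Tᵢ⁻¹ = kᵢ + kᵢ⁻¹ - Tᵢ`. -/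
lemma Sys.solve {q : F} {T : ZMod 4 → Module.End F V} {k : ZMod 4 → F} (h : Sys q T k)
    (i : ZMod 4) (x y : V) (hxy : T i x = y) : x = (k i + (k i)⁻¹) • y - T i y := by
  rw [← hxy, h.sq]; abel

/-- One double step of the chain: `x`, `y`, `z` play the roles of `v_i`, `v_{i+1}`, `v_{i+2}` for
even `i`, and `Q` that of `q ^ i`. The vector `p` is `v_{i-1}`; its coefficient vanishes for
`i = 0`. -/
lemma chain_step {q : F} (hq : q ≠ 0) {T : ZMod 4 → Module.End F V} {k : ZMod 4 → F}
    (h : Sys q T k) (Q g : F) (hQ : Q ≠ 0) (p x y z : V)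
    (hp : T 1 (g • p) = (k 1)⁻¹ • g • p) (h3 : T 3 x = k 3 • x)
    (h0 : T 0 x = ((k 0)⁻¹ * Q⁻¹ * g) • p + (k 0 + (k 0)⁻¹ - (k 0)⁻¹ * Q⁻¹) • x)
    (hy : y = x - (k 0 * k 1 * k 3 * (Q * q)) • T 2 x)
    (hz : z = y - (k 0 * (Q * q * q)) • T 0 y) :
    (T 1 x = -(k 1 * g) • p + k 1 • x + (k 1)⁻¹ • y) ∧
    (T 1 y = (k 1)⁻¹ • y) ∧
    (T 2 x = (k 0 * k 1 * k 3 * (Q * q))⁻¹ • (x - y)) ∧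
    (T 2 y = ((k 0 * k 1 * k 3 * (Q * q))⁻¹ * ((k 0 * k 1 * k 3 * (Q * q)) - k 2)
        * ((k 0 * k 1 * k 3 * (Q * q)) - (k 2)⁻¹)) • x
      + (k 2 + (k 2)⁻¹ - (k 0 * k 1 * k 3 * (Q * q))⁻¹) • y) ∧
    (T 3 y = (-((k 3)⁻¹ * ((k 0 * k 1 * k 3 * (Q * q)) - k 2)
        * ((k 0 * k 1 * k 3 * (Q * q)) - (k 2)⁻¹))) • x + (k 3)⁻¹ • y + k 3 • z) ∧
    (T 3 z = k 3 • z) ∧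
    (T 0 y = (k 0 * (Q * q * q))⁻¹ • (y - z)) ∧
    (T 0 z = ((k 0)⁻¹ * (Q * q * q)⁻¹ * ((1 - Q * q * q) * (1 - k 0 ^ 2 * (Q * q * q)))) • y
      + (k 0 + (k 0)⁻¹ - (k 0)⁻¹ * (Q * q * q)⁻¹) • z) := by
  have k0 := h.k_ne 0
  have k1 := h.k_ne 1
  have k2 := h.k_ne 2
  have k3 := h.k_ne 3
  set κ := k 0 * k 1 * k 3 * (Q * q) with hκ
  have hκ0 : κ ≠ 0 := by rw [hκ]; positivity
  set μ := k 0 * (Q * q * q) with hμ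
  have hμ0 : μ ≠ 0 := by rw [hμ]; positivity
  obtain ⟨a1, a2⟩ := quad_step' (T 2) _ κ hκ0 (h.sq 2) x
  rw [← hy] at a1 a2
  obtain ⟨b1, b2⟩ := quad_step' (T 0) _ μ hμ0 (h.sq 0) y
  rw [← hz] at b1 b2
  -- `T₁ (x - y)` is computed from `T₀ T₁ T₂ T₃ = q⁻¹`.
  have c1 : T 1 (x - y) = k 1 • (x - g • p) := by
    have e1 : T 0 (T 1 (T 2 (T 3 x))) = q⁻¹ • x := h.prod 0 x
    have e2 := h.solve 0 _ _ e1
    rw [h3, map_smul, map_smul, a1, map_smul, map_smul, h0] at e2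
    have e3 : T 1 (x - y) = (k 3)⁻¹ • κ • k 3 • κ⁻¹ • T 1 (x - y) := by
      match_scalars; field_simp
    rw [e3, e2, hκ]
    match_scalars <;> field_simp <;> ring
  obtain ⟨d1, d2⟩ := quad_step (T 1) _ (k 1) k1 rfl (h.sq 1) x y (g • p) hp c1
  -- `T₃ (y - z)` is computed from `T₂ T₃ T₀ T₁ = q⁻¹`.
  have c3 : T 3 (y - z) = (k 3)⁻¹ • (y - ((κ - k 2) * (κ - (k 2)⁻¹)) • x) := by
    have e1 : T 2 (T 3 (T 0 (T 1 y))) = q⁻¹ • y := h.prod 2 y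
    have e2 := h.solve 2 _ _ e1
    rw [d2, map_smul, map_smul, b1, map_smul, map_smul, a2] at e2
    have e3 : T 3 (y - z) = k 1 • μ • (k 1)⁻¹ • μ⁻¹ • T 3 (y - z) := by
      match_scalars; field_simp
    rw [e3, e2, hμ]
    match_scalars
    · field_simp
      rw [hκ]; field_simp; ring
    · field_simp
      rw [hκ]; field_simp; ring
  obtain ⟨f1, f2⟩ := quad_step (T 3) _ (k 3)⁻¹ (inv_ne_zero k3)
    (by rw [inv_inv, add_comm]) (h.sq 3) y z (((κ - k 2) * (κ - (k 2)⁻¹)) • x)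
    (by rw [map_smul, h3, inv_inv, smul_comm]) c3
  rw [inv_inv] at f1 f2
  refine ⟨?_, d2, a1, ?_, ?_, f2, b1, ?_⟩
  · rw [d1, smul_smul, neg_mul]
  · rw [a2]; match_scalars <;> field_simp <;> ring
  · rw [f1]; match_scalars <;> ring
  · rw [b2, hμ]; match_scalars <;> field_simp <;> ring

/-- The vectors `v_0, v_1, …` generated from `v` by alternately applying `T₂` and `T₀`. -/
noncomputable def chain (q : F) (T : ZMod 4 → Module.End F V) (k : ZMod 4 → F) (v : V) : ℕ → V
  | 0 => v
  | i + 1 => if Even i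
      then chain q T k v i - (k 0 * k 1 * k 3 * q ^ (i + 1)) • T 2 (chain q T k v i)
      else chain q T k v i - (k 0 * q ^ (i + 1)) • T 0 (chain q T k v i)

/-- The operators act on `v_0, v_1, …` by the same formulas as on the basis of the
infinite-dimensional module `M(k₀, k₁, k₂, k₃)`. At `i = 0` the truncated index `i - 1` is
harmless because the coefficient of `v_{i-1}` vanishes there. -/
structure ChainRel (q : F) (T : ZMod 4 → Module.End F V) (k : ZMod 4 → F) (v : ℕ → V) :
    Prop where
  e0 : ∀ i, Even i → T 0 (v i) = ((k 0)⁻¹ * (q ^ i)⁻¹ * (1 - q ^ i) * (1 - k 0 ^ 2 * q ^ i)) •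
    v (i - 1) + (k 0 + (k 0)⁻¹ - (k 0)⁻¹ * (q ^ i)⁻¹) • v i
  o0 : ∀ i, Odd i → T 0 (v i) = ((k 0)⁻¹ * (q ^ (i + 1))⁻¹) • (v i - v (i + 1))
  e1 : ∀ i, Even i → T 1 (v i) = (-(k 1 * (1 - q ^ i) * (1 - k 0 ^ 2 * q ^ i))) • v (i - 1)
    + k 1 • v i + (k 1)⁻¹ • v (i + 1)
  o1 : ∀ i, Odd i → T 1 (v i) = (k 1)⁻¹ • v i
  e2 : ∀ i, Even i → T 2 (v i) =
    ((k 0)⁻¹ * (k 1)⁻¹ * (k 3)⁻¹ * (q ^ (i + 1))⁻¹) • (v i - v (i + 1))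
  o2 : ∀ i, Odd i → T 2 (v i) = ((k 0 * k 1 * k 3 * q ^ i)⁻¹ * (k 0 * k 1 * k 3 * q ^ i - k 2)
        * (k 0 * k 1 * k 3 * q ^ i - (k 2)⁻¹)) • v (i - 1)
      + (k 2 + (k 2)⁻¹ - (k 0)⁻¹ * (k 1)⁻¹ * (k 3)⁻¹ * (q ^ i)⁻¹) • v i
  e3 : ∀ i, Even i → T 3 (v i) = k 3 • v i
  o3 : ∀ i, Odd i → T 3 (v i) = (-((k 3)⁻¹ * (k 0 * k 1 * k 3 * q ^ i - k 2)
        * (k 0 * k 1 * k 3 * q ^ i - (k 2)⁻¹))) • v (i - 1)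
      + (k 3)⁻¹ • v i + k 3 • v (i + 1)

lemma chainRel {q : F} (hq : q ≠ 0) {T : ZMod 4 → Module.End F V} {k : ZMod 4 → F}
    (h : Sys q T k) (v : V) (h0 : T 0 v = k 0 • v) (h3 : T 3 v = k 3 • v) :
    ChainRel q T k (chain q T k v) := by
  set u := chain q T k v with hu
  have step : ∀ m : ℕ, ∀ g : F,
      T 1 (g • u (2 * m - 1)) = (k 1)⁻¹ • g • u (2 * m - 1) →
      T 3 (u (2 * m)) = k 3 • u (2 * m) →
      T 0 (u (2 * m)) = ((k 0)⁻¹ * (q ^ (2 * m))⁻¹ * g) • u (2 * m - 1)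
        + (k 0 + (k 0)⁻¹ - (k 0)⁻¹ * (q ^ (2 * m))⁻¹) • u (2 * m) → _ :=
    fun m g a1 a3 a0 =>
      chain_step hq h (q ^ (2 * m)) g (pow_ne_zero _ hq) (u (2 * m - 1)) (u (2 * m))
        (u (2 * m + 1)) (u (2 * m + 2)) a1 a3 a0
        (by
          have : Even (2 * m) := even_two_mul m
          rw [hu, chain, if_pos this, pow_succ])
        (by
          have : ¬ Even (2 * m + 1) := by simp
          rw [hu, chain, if_neg this, pow_succ, pow_succ])
  have inv : ∀ m : ℕ,
      (T 1 (((1 - q ^ (2 * m)) * (1 - k 0 ^ 2 * q ^ (2 * m))) • u (2 * m - 1)) =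
        (k 1)⁻¹ • ((1 - q ^ (2 * m)) * (1 - k 0 ^ 2 * q ^ (2 * m))) • u (2 * m - 1)) ∧
      T 3 (u (2 * m)) = k 3 • u (2 * m) ∧
      T 0 (u (2 * m)) = ((k 0)⁻¹ * (q ^ (2 * m))⁻¹ *
          ((1 - q ^ (2 * m)) * (1 - k 0 ^ 2 * q ^ (2 * m)))) • u (2 * m - 1)
        + (k 0 + (k 0)⁻¹ - (k 0)⁻¹ * (q ^ (2 * m))⁻¹) • u (2 * m) := by
    intro m
    induction m with
    | zero => simp [hu, chain, h0, h3]
    | succ m ih =>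
      obtain ⟨-, s2, -, -, -, s6, -, s8⟩ := step m _ ih.1 ih.2.1 ih.2.2
      have hq2 : q ^ (2 * (m + 1)) = q ^ (2 * m) * q * q := by ring
      rw [hq2]
      refine ⟨?_, s6, s8⟩
      have : 2 * (m + 1) - 1 = 2 * m + 1 := by omega
      rw [this, map_smul, s2, smul_comm]
  have all := fun m => step m _ (inv m).1 (inv m).2.1 (inv m).2.2
  have even : ∀ {P : ℕ → Prop}, (∀ m, P (2 * m)) → ∀ i, Even i → P i := by
    rintro P hP i ⟨m, rfl⟩; rw [← two_mul]; exact hP m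
  have odd : ∀ {P : ℕ → Prop}, (∀ m, P (2 * m + 1)) → ∀ i, Odd i → P i := by
    rintro P hP i ⟨m, rfl⟩; exact hP m
  have pow1 : ∀ m, q ^ (2 * m + 1) = q ^ (2 * m) * q := fun m => pow_succ _ _
  have pow2 : ∀ m, q ^ (2 * m + 1 + 1) = q ^ (2 * m) * q * q := fun m => by ring
  refine ⟨even fun m => ?_, odd fun m => ?_, even fun m => ?_, odd fun m => ?_,
    even fun m => ?_, odd fun m => ?_, even fun m => ?_, odd fun m => ?_⟩ <;>
  obtain ⟨s1, s2, s3, s4, s5, s6, s7, s8⟩ := all m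
  · rw [(inv m).2.2, mul_assoc _ (1 - q ^ (2 * m))]
  · rw [s7, pow2, mul_inv]
  · rw [s1, mul_assoc (k 1)]
  · exact s2
  · rw [s3, pow1, mul_inv, mul_inv (k 0 * k 1), mul_inv (k 0)]
  · rw [s4, pow1, mul_inv, mul_inv (k 0 * k 1), mul_inv (k 0)]; rfl
  · exact (inv m).2.1
  · rw [s5, pow1]; rfl

end Chain

/-! ### Irreducible representations -/

section Irreducible

variable {V : Type*} [AddCommGroup V] [Module F V]

lemma Irred.shift {T : ZMod 4 → Module.End F V} (h : Irred T) (a : ZMod 4) :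
    Irred (fun i => T (i + a)) :=
  ⟨h.1, fun W hW => h.2 W fun i w hw => by simpa using hW (i - a) w hw⟩

lemma ChainRel.mem_flag {q : F} {T : ZMod 4 → Module.End F V} {k : ZMod 4 → F} {v : ℕ → V}
    (h : ChainRel q T k v) (j : ZMod 4) (i : ℕ) : T j (v i) ∈ flag F v (i + 2) := by
  have m1 : v i ∈ flag F v (i + 2) := DAHA.mem_flag v (by omega)
  have m2 : v (i + 1) ∈ flag F v (i + 2) := DAHA.mem_flag v (by omega)
  have m0 : v (i - 1) ∈ flag F v (i + 2) := DAHA.mem_flag v (by omega)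
  have s := fun (c : F) {x : V} (hx : x ∈ flag F v (i + 2)) => Submodule.smul_mem _ c hx
  fin_cases j <;> rcases Nat.even_or_odd i with hi | hi
  · exact (h.e0 i hi).symm ▸ add_mem (s _ m0) (s _ m1)
  · exact (h.o0 i hi).symm ▸ s _ (sub_mem m1 m2)
  · exact (h.e1 i hi).symm ▸ add_mem (add_mem (s _ m0) (s _ m1)) (s _ m2)
  · exact (h.o1 i hi).symm ▸ s _ m1
  · exact (h.e2 i hi).symm ▸ s _ (sub_mem m1 m2)
  · exact (h.o2 i hi).symm ▸ add_mem (s _ m0) (s _ m1)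
  · exact (h.e3 i hi).symm ▸ s _ m1
  · exact (h.o3 i hi).symm ▸ add_mem (add_mem (s _ m0) (s _ m1)) (s _ m2)

/-- The first `dim V` vectors of the chain are independent: a dependence `v_i ∈ ⟨v_0, …, v_{i-1}⟩`
makes this span a proper invariant subspace. -/
lemma ChainRel.notMem {q : F} {T : ZMod 4 → Module.End F V} {k : ZMod 4 → F} {v : ℕ → V}
    (h : ChainRel q T k v) (hv : v 0 ≠ 0) (hirr : Irred T) :
    ∀ i < Module.finrank F V, v i ∉ flag F v i := by
  intro i hi hmem
  have hle : flag F v (i + 1) ≤ flag F v i := by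
    refine Submodule.span_le.2 ?_
    rintro _ ⟨j, hj, rfl⟩
    rcases Nat.lt_succ_iff_lt_or_eq.1 hj with hj | rfl
    · exact DAHA.mem_flag v hj
    · exact hmem
  have hinv : ∀ a, ∀ w ∈ flag F v i, T a w ∈ flag F v i := by
    intro a w hw
    have : flag F v i ≤ (flag F v i).comap (T a) := by
      refine Submodule.span_le.2 ?_
      rintro _ ⟨j, hj, rfl⟩
      have hj : j < i := hj
      exact hle (flag_mono v (by omega) (h.mem_flag a j))
    exact this hw
  have h0 : v 0 ∈ flag F v i := hle (DAHA.mem_flag v (by omega))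
  rcases hirr.2 _ hinv with hW | hW
  · rw [hW, Submodule.mem_bot] at h0
    exact hv h0
  · have := finrank_flag_le (F := F) v i
    rw [hW, finrank_top] at this
    omega

variable [FiniteDimensional F V]

/-- `T₁` raises each even `v_i` to leading term `v_{i+1}`, so `T₁ - x` has rank at least half of the
full dimension. -/
lemma ChainRel.edim_one_le {q : F} {T : ZMod 4 → Module.End F V} {k : ZMod 4 → F} {v : ℕ → V}
    (h : ChainRel q T k v) (hk : ∀ i, k i ≠ 0) (hv : v 0 ≠ 0) (hirr : Irred T) {N : ℕ}
    (hN : Module.finrank F V = 2 * N) (x : F) : edim (T 1) x ≤ N := by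
  have := ker_bound v _ (h.notMem hv hirr) (shiftOp (T 1) x) N (fun j => 2 * j + 1)
    (fun a b hab => by dsimp only; omega) fun j hj =>
      ⟨by omega, v (2 * j), (k 1)⁻¹, inv_ne_zero (hk 1), by
        rw [shiftOp_apply, h.e1 _ (even_two_mul j)]
        have m0 : v (2 * j - 1) ∈ flag F v (2 * j + 1) := DAHA.mem_flag v (by omega)
        have m1 : v (2 * j) ∈ flag F v (2 * j + 1) := DAHA.mem_flag v (by omega)
        have s := fun (c : F) {x : V} (hx : x ∈ flag F v (2 * j + 1)) =>
          Submodule.smul_mem _ c hx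
        convert add_mem (s (-(k 1 * (1 - q ^ (2 * j)) * (1 - k 0 ^ 2 * q ^ (2 * j)))) m0)
          (sub_mem (s (k 1) m1) (s x m1)) using 1
        abel⟩
  unfold edim
  omega

lemma ChainRel.edim_two_le {q : F} (hq : q ≠ 0) {T : ZMod 4 → Module.End F V}
    {k : ZMod 4 → F} {v : ℕ → V}
    (h : ChainRel q T k v) (hk : ∀ i, k i ≠ 0) (hv : v 0 ≠ 0) (hirr : Irred T) {N : ℕ}
    (hN : Module.finrank F V = 2 * N) (x : F) : edim (T 2) x ≤ N := by
  have := ker_bound v _ (h.notMem hv hirr) (shiftOp (T 2) x) N (fun j => 2 * j + 1)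
    (fun a b hab => by dsimp only; omega) fun j hj =>
      ⟨by omega, v (2 * j), -((k 0)⁻¹ * (k 1)⁻¹ * (k 3)⁻¹ * (q ^ (2 * j + 1))⁻¹), by
        have := hk 0; have := hk 1; have := hk 3
        simp [*], by
        rw [shiftOp_apply, h.e2 _ (even_two_mul j)]
        have m1 : v (2 * j) ∈ flag F v (2 * j + 1) := DAHA.mem_flag v (by omega)
        have s := fun (c : F) => Submodule.smul_mem _ c m1
        convert sub_mem (s ((k 0)⁻¹ * (k 1)⁻¹ * (k 3)⁻¹ * (q ^ (2 * j + 1))⁻¹)) (s x) using 1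
        module⟩
  unfold edim
  omega

lemma ChainRel.edim_zero_le {q : F} (hq : q ≠ 0) {T : ZMod 4 → Module.End F V}
    {k : ZMod 4 → F} {v : ℕ → V}
    (h : ChainRel q T k v) (hk : ∀ i, k i ≠ 0) (hv : v 0 ≠ 0) (hirr : Irred T) {N : ℕ}
    (hN : Module.finrank F V = 2 * N) (x : F) : edim (T 0) x ≤ N + 1 := by
  have := ker_bound v _ (h.notMem hv hirr) (shiftOp (T 0) x) (N - 1) (fun j => 2 * j + 1 + 1)
    (fun a b hab => by dsimp only; omega) fun j hj =>
      ⟨by omega, v (2 * j + 1), -((k 0)⁻¹ * (q ^ (2 * j + 1 + 1))⁻¹), by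
        have := hk 0
        simp [*], by
        rw [shiftOp_apply, h.o0 _ (odd_two_mul_add_one j)]
        have m1 : v (2 * j + 1) ∈ flag F v (2 * j + 1 + 1) := DAHA.mem_flag v (by omega)
        have s := fun (c : F) => Submodule.smul_mem _ c m1
        convert sub_mem (s ((k 0)⁻¹ * (q ^ (2 * j + 1 + 1))⁻¹)) (s x) using 1
        module⟩
  unfold edim
  omega

/-- An eigenvalue of `T₀` other than the one carried by the generator `v_0` has an eigenspace of at
most half of the full dimension. -/
lemma ChainRel.edim_zero_le' {q : F} (hq : q ≠ 0) {T : ZMod 4 → Module.End F V}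
    {k : ZMod 4 → F} {v : ℕ → V}
    (h : ChainRel q T k v) (hk : ∀ i, k i ≠ 0) (hv : v 0 ≠ 0) (hirr : Irred T) {N : ℕ}
    (hN : Module.finrank F V = 2 * N) (x : F) (hx : x ≠ k 0) : edim (T 0) x ≤ N := by
  have := ker_bound v _ (h.notMem hv hirr) (shiftOp (T 0) x) N (fun j => 2 * j)
    (fun a b hab => by dsimp only; omega) fun j hj => by
      refine ⟨by omega, ?_⟩
      rcases j with _ | j
      · refine ⟨v 0, k 0 - x, sub_ne_zero.2 hx.symm, ?_⟩
        have h0 : shiftOp (T 0) x (v 0) - (k 0 - x) • v (2 * 0) = 0 := by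
          rw [shiftOp_apply, h.e0 0 Even.zero]
          simp [sub_smul]
        rw [h0]
        exact zero_mem _
      · refine ⟨v (2 * j + 1), -((k 0)⁻¹ * (q ^ (2 * j + 1 + 1))⁻¹), ?_, ?_⟩
        · have := hk 0
          simp [*]
        · have e : 2 * (j + 1) = 2 * j + 1 + 1 := by ring
          rw [shiftOp_apply, h.o0 _ (odd_two_mul_add_one j), e]
          have m1 : v (2 * j + 1) ∈ flag F v (2 * j + 1 + 1) := DAHA.mem_flag v (by omega)
          have s := fun (c : F) => Submodule.smul_mem _ c m1
          convert sub_mem (s ((k 0)⁻¹ * (q ^ (2 * j + 1 + 1))⁻¹)) (s x) using 1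
          module
  unfold edim
  omega

lemma exists_of_edim_pos (T : Module.End F V) (x : F) (h : 0 < edim T x) :
    ∃ v : V, v ≠ 0 ∧ T v = x • v := by
  obtain ⟨⟨v, hv⟩, hv0⟩ := Module.finrank_pos_iff_exists_ne_zero.1 h
  exact ⟨v, fun h => hv0 (by simpa using h), by simpa [sub_eq_zero] using hv⟩

/-- A `T₀`-eigenspace of more than half of the full dimension meets one of the `T₃`-eigenspaces,
because the larger of those has at least half of the full dimension. -/
lemma exists_common {q : F} {T : ZMod 4 → Module.End F V} {k : ZMod 4 → F}
    (h : Sys q T k) {N : ℕ} (hN : Module.finrank F V = 2 * N) (x : F) (hx : N < edim (T 0) x) :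
    ∃ (k' : ZMod 4 → F) (v : V), Sys q T k' ∧ k' 0 = x ∧ v ≠ 0 ∧
      T 0 v = k' 0 • v ∧ T 3 v = k' 3 • v := by
  have hx0 : x = k 0 ∨ x = (k 0)⁻¹ := by
    obtain ⟨v, hv, hv'⟩ := exists_of_edim_pos (T 0) x (by omega)
    have e := h.sq 0 v
    rw [hv', map_smul, hv', smul_smul, smul_smul] at e
    have e2 : ((x - k 0) * (x - (k 0)⁻¹)) • v = 0 := by
      have : (x - k 0) * (x - (k 0)⁻¹) = x * x - (k 0 + (k 0)⁻¹) * x + 1 := by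
        have := h.k_ne 0
        field_simp
        ring
      rw [this, add_smul, sub_smul, e]
      module
    rcases mul_eq_zero.1 ((smul_eq_zero.1 e2).resolve_right hv) with h1 | h1
    · exact Or.inl (sub_eq_zero.1 h1)
    · exact Or.inr (sub_eq_zero.1 h1)
  have h3 := edim_add (T 3) _ (k 3) (h.k_ne 3) rfl (h.sq 3)
  obtain ⟨y, hy, hyN⟩ : ∃ y, (y = k 3 ∨ y = (k 3)⁻¹) ∧ N ≤ edim (T 3) y := by
    by_cases hc : N ≤ edim (T 3) (k 3)
    · exact ⟨_, Or.inl rfl, hc⟩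
    · exact ⟨_, Or.inr rfl, by omega⟩
  have hsys : Sys q T (Function.update (Function.update k 0 x) 3 y) := by
    refine h.update _ fun i => ?_
    by_cases h3 : i = 3
    · subst h3; simpa using hy
    · by_cases h0 : i = 0
      · subst h0; rw [Function.update_of_ne h3]; simpa using hx0
      · simp [h3, h0]
  have h03 : (0 : ZMod 4) ≠ 3 := by decide
  have hne : ¬ Disjoint (LinearMap.ker (shiftOp (T 0) x)) (LinearMap.ker (shiftOp (T 3) y)) := by
    intro hd
    have := Submodule.finrank_add_finrank_le_of_disjoint hd
    unfold edim at hx hyN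
    omega
  rw [disjoint_iff, ← Ne, Submodule.ne_bot_iff] at hne
  obtain ⟨v, ⟨hv0, hv3⟩, hv⟩ := hne
  refine ⟨_, v, hsys, ?_, hv, ?_, ?_⟩
  · rw [Function.update_of_ne h03, Function.update_self]
  · rw [Function.update_of_ne h03, Function.update_self]
    simpa [sub_eq_zero] using hv0
  · rw [Function.update_self]
    simpa [sub_eq_zero] using hv3

/-- If `T₀` has an eigenspace of more than half of the full dimension, then `T₁` and `T₂` have
none. -/
lemma edim_le_of_lt {q : F} (hq : q ≠ 0) {T : ZMod 4 → Module.End F V} {k : ZMod 4 → F}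
    (h : Sys q T k) (hirr : Irred T) {N : ℕ} (hN : Module.finrank F V = 2 * N) (x : F)
    (hx : N < edim (T 0) x) (y : F) : edim (T 1) y ≤ N ∧ edim (T 2) y ≤ N := by
  obtain ⟨k', v, hs, -, hv, h0, h3⟩ := exists_common h hN x hx
  have hc := chainRel hq hs v h0 h3
  exact ⟨hc.edim_one_le hs.k_ne hv hirr hN y, hc.edim_two_le hq hs.k_ne hv hirr hN y⟩

lemma Sys.det_mul {q : F} {T : ZMod 4 → Module.End F V} {k : ZMod 4 → F} (h : Sys q T k) :
    LinearMap.det (T 0) * LinearMap.det (T 1) * LinearMap.det (T 2) * LinearMap.det (T 3) =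
      q⁻¹ ^ Module.finrank F V := by
  have e : T 0 * T 1 * T 2 * T 3 = q⁻¹ • (1 : Module.End F V) :=
    LinearMap.ext fun v => h.prod 0 v
  rw [← map_mul, ← map_mul, ← map_mul, e]
  simp [LinearMap.det_smul]

/-- Some `Tᵢ` has an eigenspace of more than half of the full dimension while `Tᵢ₋₁` has none:
if no operator had one, all determinants would be `1`; and if `Tᵢ` and `Tᵢ₋₁` both have one,
then `Tᵢ₋₂ = Tᵢ₊₂` does not. -/
lemma exists_unbalanced {q : F} (hq : q ≠ 0) (hroot : ∀ n : ℕ, 1 ≤ n → q ^ n ≠ 1)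
    {T : ZMod 4 → Module.End F V} {k : ZMod 4 → F}
    (h : Sys q T k) (hirr : Irred T) {N : ℕ} (hN : Module.finrank F V = 2 * N) (hN1 : 1 ≤ N) :
    ∃ i, (∃ x, N < edim (T i) x) ∧ ∀ x, edim (T (3 + i)) x ≤ N := by
  obtain ⟨i, x, hx⟩ : ∃ i x, N < edim (T i) x := by
    by_contra! hcon
    have hd := h.det_mul
    have h1 := fun i => det_eq_one (T i) _ (k i) (h.k_ne i) rfl (h.sq i) N hN (hcon i)
    rw [h1, h1, h1, h1, hN, inv_pow] at hd
    exact hroot (2 * N) (by omega) (by rw [← inv_inv (q ^ (2 * N)), ← hd]; simp)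
  by_cases h3 : ∀ x, edim (T (3 + i)) x ≤ N
  · exact ⟨i, ⟨x, hx⟩, h3⟩
  · push Not at h3
    obtain ⟨y, hy⟩ := h3
    refine ⟨3 + i, ⟨y, hy⟩, fun z => ?_⟩
    have := (edim_le_of_lt hq (h.shift i) (hirr.shift i) hN x (by simpa using hx) z).2
    have e : (3 + (3 + i) : ZMod 4) = 2 + i := by
      rw [← add_assoc]; rfl
    rwa [e]

/-- If `T₀` has an eigenspace of more than half of the full dimension and `T₃` has none, then the
chain of a common eigenvector closes up as in `E(k₀, k₁, k₂, k₃)`. -/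
lemma exists_chain {q : F} (hq : q ≠ 0) (hroot : ∀ n : ℕ, 1 ≤ n → q ^ n ≠ 1)
    {T : ZMod 4 → Module.End F V} {k : ZMod 4 → F}
    (h : Sys q T k) (hirr : Irred T) {N : ℕ} (hN : Module.finrank F V = 2 * N) (hN1 : 1 ≤ N)
    (x : F) (hx : N < edim (T 0) x) (h3 : ∀ y, edim (T 3) y ≤ N) :
    ∃ (k' : ZMod 4 → F) (v : ℕ → V), (∀ i, k' i ≠ 0) ∧ k' 0 ^ 2 = (q ^ (2 * N))⁻¹ ∧
      ChainRel q T k' v ∧ (∀ i < Module.finrank F V, v i ∉ flag F v i) ∧ v (2 * N) = 0 := by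
  obtain ⟨k', v, hs, rfl, hv, hv0, hv3⟩ := exists_common h hN x hx
  have hc := chainRel hq hs v hv0 hv3
  have hk0 := hs.k_ne 0
  have hsq : k' 0 ^ 2 = (q ^ (2 * N))⁻¹ := by
    have d := hs.det_mul
    have h1 := fun i => det_eq_one (T i) _ (k' i) (hs.k_ne i) rfl (hs.sq i) N hN
    -- Only `T₀` has determinant other than `1`, and its determinant is `k₀²`.
    have m : edim (T 0) (k' 0) = N + 1 :=
      le_antisymm (hc.edim_zero_le hq hs.k_ne hv hirr hN _) hx
    rw [h1 1 (hc.edim_one_le hs.k_ne hv hirr hN), h1 2 (hc.edim_two_le hq hs.k_ne hv hirr hN),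
      h1 3 h3, mul_one, mul_one, mul_one, det_eq (T 0) _ (k' 0) hk0 rfl (hs.sq 0), m, hN] at d
    obtain ⟨M, rfl⟩ : ∃ M, N = M + 1 := ⟨N - 1, by omega⟩
    rw [show 2 * (M + 1) - (M + 1 + 1) = M by omega, inv_pow q] at d
    rw [← d, inv_pow]
    field_simp
    ring
  have hne : k' 0 ≠ (k' 0)⁻¹ := by
    intro he
    have h1 : k' 0 ^ 2 = 1 := by
      rw [sq]; nth_rewrite 2 [he]; exact mul_inv_cancel₀ hk0
    rw [hsq, inv_eq_one] at h1
    exact hroot _ (by omega) h1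
  refine ⟨k', chain q T k' v, hs.k_ne, hsq, hc, hc.notMem hv hirr, ?_⟩
  by_contra hw
  -- A nonzero `v_{2N}` generates a chain for `k₀⁻¹`, which bounds the `k₀`-eigenspace of `T₀`.
  set w := chain q T k' v (2 * N) with hwdef
  have hs' : Sys q T (Function.update k' 0 (k' 0)⁻¹) := hs.update _ fun i => by
    by_cases h0 : i = 0
    · subst h0; simp
    · simp [h0]
  have hqN := pow_ne_zero (2 * N) hq
  have hw0 : T 0 w = (k' 0)⁻¹ • w := by
    have e1 : k' 0 ^ 2 * q ^ (2 * N) = 1 := by rw [hsq, inv_mul_cancel₀ hqN]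
    have e2 : (k' 0)⁻¹ * (q ^ (2 * N))⁻¹ = k' 0 := by rw [← hsq]; field_simp
    rw [hwdef, hc.e0 _ (even_two_mul N), e1, e2, sub_self, mul_zero, zero_smul, zero_add,
      add_sub_cancel_left]
  have hw3 : T 3 w = k' 3 • w := hc.e3 _ (even_two_mul N)
  have h30 : (3 : ZMod 4) ≠ 0 := by decide
  have hc' := chainRel hq hs' w (by simpa using hw0) (by simpa [h30] using hw3)
  have := hc'.edim_zero_le' hq hs'.k_ne hw hirr hN (k' 0) (by simpa using hne)
  omega

/-- Schur's lemma applied to `Tᵢ + Tᵢ⁻¹`. -/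
lemma exists_sys [IsAlgClosed F] {q : F}
    {T : ZMod 4 → Module.End F V} (hT : IsRep q T) (hirr : Irred T) : ∃ k, Sys q T k := by
  obtain ⟨hu, hcomm, hprod⟩ := hT
  obtain ⟨v₀, hv₀⟩ := hirr.1
  have : Nontrivial V := ⟨v₀, 0, hv₀⟩
  have key : ∀ i, ∃ k : F, k ≠ 0 ∧ ∀ v, T i (T i v) = (k + k⁻¹) • T i v - v := by
    intro i
    obtain ⟨c, hc⟩ := Module.End.exists_eigenvalue (T i + Ring.inverse (T i))
    have htop : Module.End.eigenspace (T i + Ring.inverse (T i)) c = ⊤ := by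
      refine (hirr.2 _ fun j w hw => ?_).resolve_left hc
      rw [Module.End.mem_eigenspace_iff] at hw ⊢
      have := LinearMap.congr_fun (hcomm i j).eq w
      simp only [Module.End.mul_apply] at this
      rw [this, hw, map_smul]
    have hsq : ∀ v, T i (T i v) = c • T i v - v := by
      intro v
      have h1 : v ∈ Module.End.eigenspace (T i + Ring.inverse (T i)) c := by
        rw [htop]; trivial
      rw [Module.End.mem_eigenspace_iff, LinearMap.add_apply] at h1
      have h2 := congrArg (T i) h1
      have h3 : T i (Ring.inverse (T i) v) = v := by
        rw [← Module.End.mul_apply, Ring.mul_inverse_cancel _ (hu i), Module.End.one_apply]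
      rw [map_add, h3, map_smul] at h2
      rw [← h2]; abel
    obtain ⟨k, hk⟩ := Module.End.exists_eigenvalue (T i)
    obtain ⟨w, hw⟩ := hk.exists_hasEigenvector
    have hw' : T i w = k • w := hw.apply_eq_smul
    have e := hsq w
    rw [hw', map_smul, hw', smul_smul, smul_smul] at e
    have e2 : (k * k - c * k + 1) • w = 0 := by
      rw [add_smul, sub_smul, e]; module
    have e3 := (smul_eq_zero.1 e2).resolve_right hw.2
    have hk0 : k ≠ 0 := by rintro rfl; simp at e3
    have hck : c = k + k⁻¹ := by
      field_simp
      linear_combination -e3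
    exact ⟨k, hk0, fun v => by rw [hsq, hck]⟩
  choose k hk hsq using key
  refine ⟨k, hk, hsq, ?_⟩
  -- Conjugating by `Tᵢ` rotates the product relation.
  have rot : ∀ n : ℕ, ∀ v, T n (T (n + 1) (T (n + 2) (T (n + 3) v))) = q⁻¹ • v := by
    intro n
    induction n with
    | zero =>
      intro v
      have := LinearMap.congr_fun hprod v
      simpa using this
    | succ n ih =>
      intro v
      have hb := (Module.End.isUnit_iff _).1 (hu n)
      have e : ((n + 1 : ℕ) : ZMod 4) = n + 1 := by push_cast; rfl
      have e1 : (n + 1 + 1 : ZMod 4) = n + 2 := by rw [add_assoc]; rfl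
      have e2 : (n + 1 + 2 : ZMod 4) = n + 3 := by rw [add_assoc]; rfl
      have e3 : (n + 1 + 3 : ZMod 4) = n := by
        rw [add_assoc, show (1 + 3 : ZMod 4) = 0 from rfl, add_zero]
      rw [e, e1, e2, e3]
      apply hb.injective
      rw [ih, map_smul]
  intro i v
  obtain ⟨n, rfl⟩ : ∃ n : ℕ, (n : ZMod 4) = i := ⟨i.val, ZMod.natCast_zmod_val i⟩
  exact rot n v

end Irreducible

/-! ### Identification with `E(k₀, k₁, k₂, k₃)` -/

/-- every `(d+1)`-dimensional irreducible representation of `H_q`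
(`d` odd) is isomorphic to some twist `E(k₀,k₁,k₂,k₃)^ε`. -/
theorem statement14 [IsAlgClosed F] (q : F) (hq : q ≠ 0)
    (hroot : ∀ n : ℕ, 1 ≤ n → q ^ n ≠ 1)
    (d : ℕ) (hd : 1 ≤ d) (hodd : Odd d)
    (V : Type u) [AddCommGroup V] [Module F V]
    (TV : ZMod 4 → Module.End F V) (hTV : IsRep q TV) (hirr : Irred TV)
    (hdim : Module.finrank F V = d + 1) :
    ∃ (ε : ZMod 4) (k0 k1 k2 k3 : F),
      k0 ≠ 0 ∧ k1 ≠ 0 ∧ k2 ≠ 0 ∧ k3 ≠ 0 ∧ k0 ^ 2 = (q ^ (d + 1))⁻¹ ∧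
      ∃ T : ZMod 4 → Module.End F (Fin (d + 1) → F),
        IsE q k0 k1 k2 k3 d T ∧ Iso (twist T ε) TV := by
  have : FiniteDimensional F V := Module.finite_of_finrank_pos (by omega)
  obtain ⟨N, hN⟩ : ∃ N, d + 1 = 2 * N := by
    obtain ⟨m, rfl⟩ := hodd
    exact ⟨m + 1, by ring⟩
  have hN' : Module.finrank F V = 2 * N := by omega
  obtain ⟨κ, hκ⟩ := exists_sys hTV hirr
  obtain ⟨i₀, ⟨x, hx⟩, h3⟩ := exists_unbalanced hq hroot hκ hirr hN' (by omega)
  obtain ⟨k, v, hk, hk0, hc, hmem, hlast⟩ := exists_chain hq hroot (hκ.shift i₀)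
    (hirr.shift i₀) hN' (by omega) x (by simpa using hx) h3
  rw [← hN] at hlast hk0
  rw [hdim] at hmem
  let b := basisOfLinearIndependentOfCardEqFinrank (linInd_of_notMem_flag v (d + 1) hmem)
    (by rw [hdim, Fintype.card_fin])
  have hb : ∀ i : Fin (d + 1), b i = v i := fun i => by
    simp [b]
  let S : V ≃ₗ[F] (Fin (d + 1) → F) := b.equivFun
  have hS : ∀ i ≤ d, S (v i) = e F d i := by
    intro i hi
    have hlt : i < d + 1 := by omega
    rw [e, dif_pos hlt, ← hb ⟨i, hlt⟩]
    ext j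
    rw [Pi.single_apply]
    simp [S, eq_comm]
  have hT : ∀ a i, i ≤ d → S.conj (TV (a + i₀)) (e F d i) = S (TV (a + i₀) (v i)) := by
    intro a i hi
    rw [← hS i hi, LinearEquiv.conj_apply_apply, LinearEquiv.symm_apply_apply]
  refine ⟨-i₀, k 0, k 1, k 2, k 3, hk 0, hk 1, hk 2, hk 3, hk0,
    fun a => S.conj (TV (a + i₀)), ?_, S.symm, fun a w => ?_⟩
  · refine ⟨fun i hi h2 hd => ?_, fun i hi hd => ?_, ?_, ?_, fun i hi h2 hd => ?_,
      fun i hi hd => ?_, ?_, fun i hi hd => ?_, fun i hi hd => ?_, fun i hi hd => ?_,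
      fun i hi hd => ?_, ?_⟩
    · rw [hT _ _ (by omega), hc.e0 i hi, map_add, map_smul, map_smul, hS _ (by omega),
        hS _ (by omega)]
    · have : i + 2 ≤ d := by have := hi.pos; omega
      rw [hT _ _ (by omega), hc.o0 i hi, map_smul, map_sub, hS _ (by omega), hS _ (by omega)]
    · rw [hT _ _ (by omega), hc.e0 0 Even.zero]
      simp [hS 0 (by omega)]
    · have : (k 0)⁻¹ * (q ^ (d + 1))⁻¹ = k 0 := by
        rw [← hk0]; have := hk 0; field_simp
      rw [hT _ _ le_rfl, hc.o0 d hodd, hlast, sub_zero, map_smul, hS _ le_rfl, this]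
    · rw [hT _ _ (by omega), hc.e1 i hi, map_add, map_add, map_smul, map_smul, map_smul,
        hS _ (by omega), hS _ (by omega), hS _ (by omega)]
    · rw [hT _ _ hd, hc.o1 i hi, map_smul, hS _ hd]
    · rw [hT _ _ (by omega), hc.e1 0 Even.zero]
      simp [hS 0 (by omega), hS 1 hd]
    · rw [hT _ _ (by omega), hc.e2 i hi, map_smul, map_sub, hS _ (by omega), hS _ (by omega)]
    · rw [hT _ _ hd, hc.o2 i hi, map_add, map_smul, map_smul, hS _ (by omega), hS _ hd]
    · rw [hT _ _ (by omega), hc.e3 i hi, map_smul, hS _ (by omega)]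
    · have : i + 2 ≤ d := by have := hi.pos; omega
      rw [hT _ _ (by omega), hc.o3 i hi, map_add, map_add, map_smul, map_smul, map_smul,
        hS _ (by omega), hS _ (by omega), hS _ (by omega)]
    · rw [hT _ _ le_rfl, hc.o3 d hodd, hlast, smul_zero, add_zero, map_add, map_smul, map_smul,
        hS _ le_rfl, hS _ (by omega)]
  · simp [twist, LinearEquiv.conj_apply_apply]

end DAHA
end

section
/- Let d ≥ 0 be an even integer and let k0,k1,k2,k3 be nonzero elements of F with k0 k1 k2 k3 = q^{-d-1}. Let u_0,…,u_d be the defining basis of O(k1,k2,k3,k0) with operator quadruple (S0,S1,S2,S3), and let v_0,…,v_d be the defining basis of O(k0,k1,k2,k3). Then there exists a unique F-linear map φ from O(k0,k1,k2,k3) to the twisted representation O(k1,k2,k3,k0)^{3 mod 4} (whose operator quadruple is (S3,S0,S1,S2)) which intertwines the two operator quadruples and sends v_0 to u_d. Moreover, φ is an isomorphism if and only if q^i ≠ 1, k1^2 ≠ q^{-i}, and k3^2 ≠ q^{-i} for all even i with 2 ≤ i ≤ d. -/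
/-!
The modules `O` are finite-dimensional shadows of the Verma-type module `M(k₀,k₁,k₂,k₃)` with basis
`m₀, m₁, …`: because `k₀k₁k₂k₃ = q^{-d-1}`, the defining basis of `O(k₀,k₁,k₂,k₃)`, extended by `0`
beyond index `d`, satisfies every relation of `M` (`IsO.mrel`; the predicate `MRel` records these
relations for an arbitrary sequence of vectors).

`M` has a universal property. A spanning sequence satisfying the relations of `M` forces the Hecke
relations `Xᵢ + Xᵢ⁻¹ = kᵢ + kᵢ⁻¹` and `X₀X₁X₂X₃ = q⁻¹` (`MRel.toHQ`), and these are invariant under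
cyclic rotation of the operators together with the parameters. Conversely, in a module where they
hold, every `x` with `X₀x = k₀x` and `X₃x = k₃x` is the first term of exactly one sequence
satisfying the relations of `M`, namely the recursively defined `wseq` (`HQ.mrel` for existence,
`MRel.map_eq_wseq` for uniqueness).

Applied to the quadruple `(S₃,S₀,S₁,S₂)` and the vector `u_d`, this produces vectors
`w₀ = u_d, w₁, w₂, …`, and an intertwiner with `v₀ ↦ u_d` must send `vᵢ` to `wᵢ`; this is uniqueness.
For existence one needs `w_{d+1} = 0`. Now `w_{d+1} = w_d - k₂⁻¹ S₁ w_d` lies in the span of the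
`u_j` with `j` odd, on which the `u_{j+1}`-component of `S₀` is a nonzero multiple of the
`u_j`-component, while `S₀ w_{d+1} = k₁⁻¹ w_{d+1}`; hence `w_{d+1} = 0` (`eq_zero_of_eigen`), and the
recursion gives `wᵢ = 0` for all `i > d`.

For bijectivity, following the coefficient of `u_{d-n}` through the recursion shows that
`wₙ ≡ (∏_{i<n} scᵢ) u_{d-n}` modulo the span of the `u_j` with `j > d - n` (`MRel.lead`), for explicit
scalars `scᵢ`. So the matrix of `φ` is triangular once its rows are reversed, and `φ` is bijective
iff `scᵢ ≠ 0` for all `i < d` (`bijective_iff`). For even `i` this says `q^{d-i} ≠ 1` and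
`k₁² ≠ q^{-(d-i)}`; for odd `i` it says `q^{i+1} ≠ 1` and `k₃² ≠ q^{-(i+1)}` (`sc_ne_zero_iff`).
-/

universe u

namespace DAHA

variable {F : Type*} [Field F]

/-! ### Relations of the Verma-type module `M` -/

/-- The sequence `w` satisfies the formulas that define the action of `M(k₀,k₁,k₂,k₃)` on its basis
(compare `IsM`). The formulas are split by parity of the index, with indices written as `0`,
`2 * n`, `2 * n + 1` and `2 * n + 2`, so that no subtraction of natural numbers occurs. -/
structure MRel {V : Type*} [AddCommGroup V] [Module F V] (q k0 k1 k2 k3 : F)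
    (X0 X1 X2 X3 : Module.End F V) (w : ℕ → V) : Prop where
  x0z : X0 (w 0) = k0 • w 0
  x0e : ∀ n : ℕ, X0 (w (2 * n + 2)) =
    (k0⁻¹ * (q ^ (2 * n + 2))⁻¹ * (1 - q ^ (2 * n + 2)) * (1 - k0 ^ 2 * q ^ (2 * n + 2))) •
        w (2 * n + 1)
      + (k0 + k0⁻¹ - k0⁻¹ * (q ^ (2 * n + 2))⁻¹) • w (2 * n + 2)
  x0o : ∀ n : ℕ, X0 (w (2 * n + 1)) =
    (k0⁻¹ * (q ^ (2 * n + 2))⁻¹) • (w (2 * n + 1) - w (2 * n + 2))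
  x1z : X1 (w 0) = k1 • w 0 + k1⁻¹ • w 1
  x1e : ∀ n : ℕ, X1 (w (2 * n + 2)) =
    (-(k1 * (1 - q ^ (2 * n + 2)) * (1 - k0 ^ 2 * q ^ (2 * n + 2)))) • w (2 * n + 1)
      + k1 • w (2 * n + 2) + k1⁻¹ • w (2 * n + 3)
  x1o : ∀ n : ℕ, X1 (w (2 * n + 1)) = k1⁻¹ • w (2 * n + 1)
  x2e : ∀ n : ℕ, X2 (w (2 * n)) =
    (k0⁻¹ * k1⁻¹ * k3⁻¹ * (q ^ (2 * n + 1))⁻¹) • (w (2 * n) - w (2 * n + 1))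
  x2o : ∀ n : ℕ, X2 (w (2 * n + 1)) =
    ((k0 * k1 * k3 * q ^ (2 * n + 1))⁻¹ * (k0 * k1 * k3 * q ^ (2 * n + 1) - k2)
        * (k0 * k1 * k3 * q ^ (2 * n + 1) - k2⁻¹)) • w (2 * n)
      + (k2 + k2⁻¹ - k0⁻¹ * k1⁻¹ * k3⁻¹ * (q ^ (2 * n + 1))⁻¹) • w (2 * n + 1)
  x3e : ∀ n : ℕ, X3 (w (2 * n)) = k3 • w (2 * n)
  x3o : ∀ n : ℕ, X3 (w (2 * n + 1)) =
    (-(k3⁻¹ * (k0 * k1 * k3 * q ^ (2 * n + 1) - k2)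
        * (k0 * k1 * k3 * q ^ (2 * n + 1) - k2⁻¹))) • w (2 * n)
      + k3⁻¹ • w (2 * n + 1) + k3 • w (2 * n + 2)

/-- The quotient relations of `H_q` with fixed parameters: the Hecke relation
`Xᵢ² = (kᵢ + kᵢ⁻¹) Xᵢ - 1` for each `i`, and `X₀X₁X₂X₃ = q⁻¹`. For nonzero `kᵢ` the Hecke relation
makes `Xᵢ` invertible with inverse `kᵢ + kᵢ⁻¹ - Xᵢ`, so no inverses need to be mentioned. -/
structure HQ {V : Type*} [AddCommGroup V] [Module F V] (q k0 k1 k2 k3 : F)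
    (X0 X1 X2 X3 : Module.End F V) : Prop where
  h0 : ∀ x, X0 (X0 x) = (k0 + k0⁻¹) • X0 x - x
  h1 : ∀ x, X1 (X1 x) = (k1 + k1⁻¹) • X1 x - x
  h2 : ∀ x, X2 (X2 x) = (k2 + k2⁻¹) • X2 x - x
  h3 : ∀ x, X3 (X3 x) = (k3 + k3⁻¹) • X3 x - x
  prod : ∀ x, X0 (X1 (X2 (X3 x))) = q⁻¹ • x

section Abstract

variable {V : Type*} [AddCommGroup V] [Module F V] {q k0 k1 k2 k3 : F}
  {X0 X1 X2 X3 : Module.End F V}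

/-- The relations are invariant under cyclic rotation: conjugate `X₀X₁X₂X₃ = q⁻¹` by `X₃`. -/
lemma HQ.rotate (h : HQ q k0 k1 k2 k3 X0 X1 X2 X3) : HQ q k3 k0 k1 k2 X3 X0 X1 X2 := by
  refine ⟨h.h3, h.h0, h.h1, h.h2, fun x => ?_⟩
  have hx : x = X3 ((k3 + k3⁻¹) • x - X3 x) := by
    rw [map_sub, map_smul, h.h3]; module
  rw [hx, h.prod, map_smul]

lemma MRel.quad0 {w : ℕ → V} (h : MRel q k0 k1 k2 k3 X0 X1 X2 X3 w) (hq : q ≠ 0)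
    (hk0 : k0 ≠ 0) (i : ℕ) : X0 (X0 (w i)) = (k0 + k0⁻¹) • X0 (w i) - w i := by
  have ho (n : ℕ) : X0 (X0 (w (2 * n + 1))) = (k0 + k0⁻¹) • X0 (w (2 * n + 1)) - w (2 * n + 1) := by
    simp only [h.x0e, h.x0o, map_smul, map_sub]
    have : q ^ (2 * n + 2) ≠ 0 := pow_ne_zero _ hq
    generalize q ^ (2 * n + 2) = Q at *
    match_scalars <;> field_simp <;> ring
  have he (n : ℕ) : X0 (X0 (w (2 * n + 2))) = (k0 + k0⁻¹) • X0 (w (2 * n + 2)) - w (2 * n + 2) := by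
    simp only [h.x0e, h.x0o, map_add, map_smul]
    have : q ^ (2 * n + 2) ≠ 0 := pow_ne_zero _ hq
    generalize q ^ (2 * n + 2) = Q at *
    match_scalars <;> field_simp <;> ring
  rcases Nat.even_or_odd' i with ⟨n, rfl | rfl⟩
  · cases n with
    | zero =>
      simp only [mul_zero, h.x0z, map_smul]
      match_scalars; field_simp; ring
    | succ n => exact he n
  · exact ho n

lemma MRel.quad1 {w : ℕ → V} (h : MRel q k0 k1 k2 k3 X0 X1 X2 X3 w)
    (hk1 : k1 ≠ 0) (i : ℕ) : X1 (X1 (w i)) = (k1 + k1⁻¹) • X1 (w i) - w i := by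
  rcases Nat.even_or_odd' i with ⟨n, rfl | rfl⟩
  · cases n with
    | zero =>
      have h1 := h.x1o 0
      simp only [mul_zero, zero_add] at h1
      simp only [mul_zero, h.x1z, h1, map_smul, map_add]
      match_scalars <;> field_simp <;> ring
    | succ n =>
      have h1 := h.x1o (n + 1)
      rw [show 2 * (n + 1) = 2 * n + 2 by ring] at *
      simp only [h.x1e, h.x1o, h1, map_smul, map_add]
      match_scalars <;> field_simp <;> ring
  · simp only [h.x1o, map_smul]
    match_scalars; field_simp; ring

lemma MRel.quad2 {w : ℕ → V} (h : MRel q k0 k1 k2 k3 X0 X1 X2 X3 w) (hq : q ≠ 0)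
    (hk0 : k0 ≠ 0) (hk1 : k1 ≠ 0) (hk2 : k2 ≠ 0) (hk3 : k3 ≠ 0) (i : ℕ) :
    X2 (X2 (w i)) = (k2 + k2⁻¹) • X2 (w i) - w i := by
  rcases Nat.even_or_odd' i with ⟨n, rfl | rfl⟩ <;>
  · simp only [h.x2e, h.x2o, map_smul, map_add, map_sub]
    have : q ^ (2 * n + 1) ≠ 0 := pow_ne_zero _ hq
    generalize q ^ (2 * n + 1) = Q at *
    match_scalars <;> field_simp <;> ring

lemma MRel.quad3 {w : ℕ → V} (h : MRel q k0 k1 k2 k3 X0 X1 X2 X3 w)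
    (hk3 : k3 ≠ 0) (i : ℕ) :
    X3 (X3 (w i)) = (k3 + k3⁻¹) • X3 (w i) - w i := by
  rcases Nat.even_or_odd' i with ⟨n, rfl | rfl⟩
  · simp only [h.x3e, map_smul]
    match_scalars; field_simp; ring
  · have h1 := h.x3e (n + 1)
    rw [show 2 * (n + 1) = 2 * n + 2 by ring] at *
    simp only [h.x3o, h.x3e, h1, map_smul, map_add]
    match_scalars <;> field_simp <;> ring

/-- On the vectors `w i`, the relation `X₀X₁X₂X₃ = q⁻¹` holds in the equivalent form
`X₂X₃ = q⁻¹ X₁⁻¹ X₀⁻¹`, where `Xᵢ⁻¹ = kᵢ + kᵢ⁻¹ - Xᵢ` for `i = 0, 1`. -/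
lemma MRel.prod {w : ℕ → V} (h : MRel q k0 k1 k2 k3 X0 X1 X2 X3 w) (hq : q ≠ 0)
    (hk0 : k0 ≠ 0) (hk1 : k1 ≠ 0) (hk2 : k2 ≠ 0) (hk3 : k3 ≠ 0)
    (h0 : ∀ x, X0 (X0 x) = (k0 + k0⁻¹) • X0 x - x)
    (h1 : ∀ x, X1 (X1 x) = (k1 + k1⁻¹) • X1 x - x) (i : ℕ) :
    X0 (X1 (X2 (X3 (w i)))) = q⁻¹ • w i := by
  -- Here `y` stands for `X₀⁻¹ x`. Only `X₀⁻¹` and `X₁⁻¹` need to be expanded on `w i`, which keeps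
  -- the coefficient identities short.
  have key : ∀ x y, X2 (X3 x) = q⁻¹ • ((k1 + k1⁻¹) • y - X1 y) → y = (k0 + k0⁻¹) • x - X0 x →
      X0 (X1 (X2 (X3 x))) = q⁻¹ • x := by
    intro x y hx hy
    rw [hx, map_smul, map_sub X1, map_smul X1, h1, sub_sub_cancel, map_smul, hy, map_sub, map_smul, h0,
      sub_sub_cancel]
  refine key _ _ ?_ rfl
  rcases Nat.even_or_odd' i with ⟨n, rfl | rfl⟩
  · cases n with
    | zero =>
      have h2 := h.x2e 0
      have h3 := h.x3e 0
      simp only [mul_zero, zero_add] at h2 h3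
      simp only [mul_zero, h2, h3, h.x1z, h.x0z, map_smul, map_sub]
      match_scalars <;> field_simp <;> ring
    | succ n =>
      have h2 := h.x2e (n + 1)
      have h3 := h.x3e (n + 1)
      rw [show 2 * (n + 1) = 2 * n + 2 by ring] at *
      simp only [h.x0e, h.x1e, h.x1o, h2, h3, map_smul, map_add, map_sub]
      simp only [pow_succ _ (2 * n), pow_succ _ (2 * n + 1), pow_succ _ (2 * n + 2)]
      have : q ^ (2 * n) ≠ 0 := pow_ne_zero _ hq
      generalize q ^ (2 * n) = Q at *
      match_scalars <;> field_simp <;> ring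
  · have h2 := h.x2e (n + 1)
    rw [show 2 * (n + 1) = 2 * n + 2 by ring] at *
    simp only [h.x0o, h.x1e, h.x1o, h.x2e, h.x2o, h2, h.x3o, map_smul, map_add, map_sub]
    simp only [pow_succ _ (2 * n), pow_succ _ (2 * n + 1), pow_succ _ (2 * n + 2)]
    have : q ^ (2 * n) ≠ 0 := pow_ne_zero _ hq
    generalize q ^ (2 * n) = Q at *
    match_scalars <;> field_simp <;> ring

/-- A spanning sequence with the relations of `M` forces the Hecke and product relations. -/
lemma MRel.toHQ {w : ℕ → V} (h : MRel q k0 k1 k2 k3 X0 X1 X2 X3 w) (hq : q ≠ 0)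
    (hk0 : k0 ≠ 0) (hk1 : k1 ≠ 0) (hk2 : k2 ≠ 0) (hk3 : k3 ≠ 0)
    (hw : Submodule.span F (Set.range w) = ⊤) : HQ q k0 k1 k2 k3 X0 X1 X2 X3 := by
  have ext : ∀ A B : Module.End F V, (∀ i, A (w i) = B (w i)) → ∀ x, A x = B x := by
    intro A B hAB x
    have : A = B := LinearMap.ext_on_range hw hAB
    rw [this]
  have e0 := ext (X0 * X0) ((k0 + k0⁻¹) • X0 - 1) (h.quad0 hq hk0)
  have e1 := ext (X1 * X1) ((k1 + k1⁻¹) • X1 - 1) (h.quad1 hk1)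
  have e2 := ext (X2 * X2) ((k2 + k2⁻¹) • X2 - 1) (h.quad2 hq hk0 hk1 hk2 hk3)
  have e3 := ext (X3 * X3) ((k3 + k3⁻¹) • X3 - 1) (h.quad3 hk3)
  exact ⟨e0, e1, e2, e3,
    ext (X0 * X1 * X2 * X3) (q⁻¹ • 1) (h.prod hq hk0 hk1 hk2 hk3 e0 e1)⟩

/-- The inductive step for `HQ.mrel`. Write `Q = q^{2n}` and `(a, b, c, d)` for
`(w_{2n-1}, w_{2n}, w_{2n+1}, w_{2n+2})`. The vectors `c` and `d` are defined from `a`, `b` by the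
formulas `hb1` for `X₁ b` and `hc0` for `X₀ c`; the remaining relations for `b`, `c`, `d` follow from
those for `a`, `b`. -/
lemma HQ.step (h : HQ q k0 k1 k2 k3 X0 X1 X2 X3) (hq : q ≠ 0)
    (hk0 : k0 ≠ 0) (hk1 : k1 ≠ 0) (hk2 : k2 ≠ 0) (hk3 : k3 ≠ 0) {Q : F} (hQ : Q ≠ 0)
    {a b c d : V} (ha : X1 a = k1⁻¹ • a)
    (hb0 : X0 b = (k0⁻¹ * Q⁻¹ * (1 - Q) * (1 - k0 ^ 2 * Q)) • a
      + (k0 + k0⁻¹ - k0⁻¹ * Q⁻¹) • b)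
    (hb3 : X3 b = k3 • b)
    (hb1 : X1 b = (-(k1 * (1 - Q) * (1 - k0 ^ 2 * Q))) • a + k1 • b + k1⁻¹ • c)
    (hc0 : X0 c = (k0⁻¹ * (Q * q * q)⁻¹) • (c - d)) :
    X1 c = k1⁻¹ • c ∧
    X2 b = (k0⁻¹ * k1⁻¹ * k3⁻¹ * (Q * q)⁻¹) • (b - c) ∧
    X2 c = ((k0 * k1 * k3 * (Q * q))⁻¹ * (k0 * k1 * k3 * (Q * q) - k2)
        * (k0 * k1 * k3 * (Q * q) - k2⁻¹)) • b
      + (k2 + k2⁻¹ - k0⁻¹ * k1⁻¹ * k3⁻¹ * (Q * q)⁻¹) • c ∧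
    X0 d = (k0⁻¹ * (Q * q * q)⁻¹ * (1 - (Q * q * q)) * (1 - k0 ^ 2 * (Q * q * q))) • c
      + (k0 + k0⁻¹ - k0⁻¹ * (Q * q * q)⁻¹) • d ∧
    X3 c = (-(k3⁻¹ * (k0 * k1 * k3 * (Q * q) - k2)
        * (k0 * k1 * k3 * (Q * q) - k2⁻¹))) • b
      + k3⁻¹ • c + k3 • d ∧
    X3 d = k3 • d := by
  have hc : c = k1 • (X1 b - k1 • b + (k1 * (1 - Q) * (1 - k0 ^ 2 * Q)) • a) := by
    rw [hb1]; match_scalars <;> field_simp <;> ring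
  have hd : d = c - (k0 * (Q * q * q)) • X0 c := by
    rw [hc0]; match_scalars <;> field_simp <;> ring
  have hc1 : X1 c = k1⁻¹ • c := by
    have : X1 c = k1 • (X1 (X1 b) - k1 • X1 b + (k1 * (1 - Q) * (1 - k0 ^ 2 * Q)) • X1 a) := by
      conv_lhs => rw [hc]
      simp only [map_add, map_sub, map_smul]
    rw [this, h.h1, hb1, ha]
    match_scalars <;> field_simp <;> ring
  -- `X₂X₃ = q⁻¹ X₁⁻¹ X₀⁻¹`
  have inv : ∀ x, X2 (X3 x) = q⁻¹ • ((k1 + k1⁻¹) • ((k0 + k0⁻¹) • x - X0 x)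
      - X1 ((k0 + k0⁻¹) • x - X0 x)) := by
    intro x
    have h1 : X1 (X2 (X3 x)) = q⁻¹ • ((k0 + k0⁻¹) • x - X0 x) := by
      have := h.h0 (X1 (X2 (X3 x)))
      rw [h.prod, map_smul] at this
      linear_combination (norm := module) this
    have := h.h1 (X2 (X3 x))
    rw [h1, map_smul] at this
    linear_combination (norm := module) this
  have hb2 : X2 b = (k0⁻¹ * k1⁻¹ * k3⁻¹ * (Q * q)⁻¹) • (b - c) := by
    have := inv b
    rw [hb3, map_smul, hb0] at this
    simp only [map_add, map_sub, map_smul, ha, hb1] at this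
    have h2 : X2 b = k3⁻¹ • (k3 • X2 b) := by rw [smul_smul, inv_mul_cancel₀ hk3, one_smul]
    rw [h2, this]
    match_scalars <;> field_simp <;> ring
  have hc' : c = b - (k0 * k1 * k3 * (Q * q)) • X2 b := by
    rw [hb2]; match_scalars <;> field_simp <;> ring
  have hc2 : X2 c = ((k0 * k1 * k3 * (Q * q))⁻¹ * (k0 * k1 * k3 * (Q * q) - k2)
        * (k0 * k1 * k3 * (Q * q) - k2⁻¹)) • b
      + (k2 + k2⁻¹ - k0⁻¹ * k1⁻¹ * k3⁻¹ * (Q * q)⁻¹) • c := by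
    have : X2 c = X2 b - (k0 * k1 * k3 * (Q * q)) • X2 (X2 b) := by
      conv_lhs => rw [hc']
      simp only [map_sub, map_smul]
    rw [this, h.h2, hb2]
    match_scalars <;> field_simp <;> ring
  have hd0 : X0 d = (k0⁻¹ * (Q * q * q)⁻¹ * (1 - (Q * q * q)) * (1 - k0 ^ 2 * (Q * q * q))) • c
      + (k0 + k0⁻¹ - k0⁻¹ * (Q * q * q)⁻¹) • d := by
    have : X0 d = X0 c - (k0 * (Q * q * q)) • X0 (X0 c) := by
      conv_lhs => rw [hd]
      simp only [map_sub, map_smul]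
    rw [this, h.h0, hc0]
    match_scalars <;> field_simp <;> ring
  -- The rotated relation `X₃X₀X₁X₂ = q⁻¹` at `X₂⁻¹ c` gives `X₃X₀X₁ c`, where `X₀X₁ c` is a
  -- multiple of `c - d`.
  have hA : X3 (c - d) = (-(k3⁻¹ * (k0 * k1 * k3 * (Q * q) - k2)
        * (k0 * k1 * k3 * (Q * q) - k2⁻¹))) • b + k3⁻¹ • c := by
    have h1 := h.rotate.prod ((k2 + k2⁻¹) • c - X2 c)
    rw [map_sub X2, map_smul X2, h.h2, sub_sub_cancel, hc1, map_smul, hc0, map_smul, map_smul,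
      hc2] at h1
    have h2 : X3 (c - d) = (k1 * k0 * (Q * q * q)) • (k1⁻¹ • (k0⁻¹ * (Q * q * q)⁻¹) • X3 (c - d)) := by
      match_scalars; field_simp
    rw [h2, h1]
    match_scalars <;> field_simp <;> ring
  have hc3 : X3 c = (-(k3⁻¹ * (k0 * k1 * k3 * (Q * q) - k2)
        * (k0 * k1 * k3 * (Q * q) - k2⁻¹))) • b
      + k3⁻¹ • c + k3 • d := by
    have h1 := h.h3 (c - d)
    rw [hA, map_add, map_smul, map_smul, hb3] at h1
    have h2 : X3 c = k3 • (k3⁻¹ • X3 c) := by rw [smul_smul, mul_inv_cancel₀ hk3, one_smul]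
    rw [h2, ← sub_eq_iff_eq_add'.mpr h1.symm]
    match_scalars <;> field_simp <;> ring
  refine ⟨hc1, hb2, hc2, hd0, hc3, ?_⟩
  rw [map_sub, hc3] at hA
  linear_combination (norm := module) (-1 : F) • hA

/-- The only sequence starting at `x` that can satisfy the relations of `M`: the formula for
`X₁ (w (2n))` is solved for `w (2n + 1)`, and the one for `X₀ (w (2n + 1))` for `w (2n + 2)`. In the
recursive clause the index `i + 2` has the parity of `i`. -/
def wseq (q k0 k1 : F) (X0 X1 : Module.End F V) (x : V) : ℕ → V
  | 0 => x
  | 1 => k1 • (X1 x - k1 • x)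
  | (i + 2) => if Even i then
      wseq q k0 k1 X0 X1 x (i + 1) - (k0 * q ^ (i + 2)) • X0 (wseq q k0 k1 X0 X1 x (i + 1))
    else k1 • (X1 (wseq q k0 k1 X0 X1 x (i + 1)) - k1 • wseq q k0 k1 X0 X1 x (i + 1)
      + (k1 * (1 - q ^ (i + 1)) * (1 - k0 ^ 2 * q ^ (i + 1))) • wseq q k0 k1 X0 X1 x i)

lemma wseq_even (x : V) (n : ℕ) : wseq q k0 k1 X0 X1 x (2 * n + 2) =
    wseq q k0 k1 X0 X1 x (2 * n + 1)
      - (k0 * q ^ (2 * n + 2)) • X0 (wseq q k0 k1 X0 X1 x (2 * n + 1)) := by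
  rw [wseq, if_pos (even_two_mul n)]

lemma wseq_odd (x : V) (n : ℕ) : wseq q k0 k1 X0 X1 x (2 * n + 3) =
    k1 • (X1 (wseq q k0 k1 X0 X1 x (2 * n + 2)) - k1 • wseq q k0 k1 X0 X1 x (2 * n + 2)
      + (k1 * (1 - q ^ (2 * n + 2)) * (1 - k0 ^ 2 * q ^ (2 * n + 2))) •
        wseq q k0 k1 X0 X1 x (2 * n + 1)) := by
  rw [wseq, if_neg (by simp [parity_simps])]

/-- Universal property of `M`: under the Hecke and product relations, a common eigenvector of `X₀`
and `X₃` with eigenvalues `k₀` and `k₃` starts a sequence with the relations of `M`. -/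
lemma HQ.mrel (h : HQ q k0 k1 k2 k3 X0 X1 X2 X3) (hq : q ≠ 0)
    (hk0 : k0 ≠ 0) (hk1 : k1 ≠ 0) (hk2 : k2 ≠ 0) (hk3 : k3 ≠ 0) {x : V}
    (hx0 : X0 x = k0 • x) (hx3 : X3 x = k3 • x) :
    MRel q k0 k1 k2 k3 X0 X1 X2 X3 (wseq q k0 k1 X0 X1 x) := by
  set w := wseq q k0 k1 X0 X1 x with hw
  have w0 : w 0 = x := by rw [hw, wseq]
  have x1z : X1 (w 0) = k1 • w 0 + k1⁻¹ • w 1 := by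
    rw [show w 1 = k1 • (X1 (w 0) - k1 • w 0) by rw [w0, hw, wseq]]
    match_scalars <;> field_simp <;> ring
  have x0o (n : ℕ) : X0 (w (2 * n + 1)) =
      (k0⁻¹ * (q ^ (2 * n + 2))⁻¹) • (w (2 * n + 1) - w (2 * n + 2)) := by
    have : q ^ (2 * n + 2) ≠ 0 := pow_ne_zero _ hq
    rw [hw, wseq_even]
    match_scalars <;> field_simp <;> ring
  have x1e (n : ℕ) : X1 (w (2 * n + 2)) =
      (-(k1 * (1 - q ^ (2 * n + 2)) * (1 - k0 ^ 2 * q ^ (2 * n + 2)))) • w (2 * n + 1)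
        + k1 • w (2 * n + 2) + k1⁻¹ • w (2 * n + 3) := by
    have : q ^ (2 * n + 2) ≠ 0 := pow_ne_zero _ hq
    rw [hw, wseq_odd]
    match_scalars <;> field_simp <;> ring
  have pw (n : ℕ) : q ^ (2 * n) * q * q = q ^ (2 * n + 2) := by ring
  have pw1 (n : ℕ) : q ^ (2 * n) * q = q ^ (2 * n + 1) := by ring
  have pw2 (n : ℕ) : q ^ (2 * n + 2) * q = q ^ (2 * n + 2 + 1) := by ring
  have pw3 (n : ℕ) : q ^ (2 * n + 2 + 1) * q = q ^ (2 * n + 2 + 2) := by ring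
  -- For `n = 0` there is no `w_{-1}`; with `Q = 1` its coefficients vanish, so `a = 0` will do.
  have base := h.step hq hk0 hk1 hk2 hk3 (Q := 1) one_ne_zero (a := 0) (b := w 0) (c := w 1)
    (d := w 2) (by simp) (by rw [w0, hx0]; simp) (by rw [w0, hx3]) (by rw [x1z]; simp)
    (by simpa [pow_two] using x0o 0)
  have all (n : ℕ) : X1 (w (2 * n + 1)) = k1⁻¹ • w (2 * n + 1) ∧
      X2 (w (2 * n)) = (k0⁻¹ * k1⁻¹ * k3⁻¹ * (q ^ (2 * n + 1))⁻¹) • (w (2 * n) - w (2 * n + 1)) ∧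
      X2 (w (2 * n + 1)) =
        ((k0 * k1 * k3 * q ^ (2 * n + 1))⁻¹ * (k0 * k1 * k3 * q ^ (2 * n + 1) - k2)
          * (k0 * k1 * k3 * q ^ (2 * n + 1) - k2⁻¹)) • w (2 * n)
        + (k2 + k2⁻¹ - k0⁻¹ * k1⁻¹ * k3⁻¹ * (q ^ (2 * n + 1))⁻¹) • w (2 * n + 1) ∧
      X0 (w (2 * n + 2)) =
        (k0⁻¹ * (q ^ (2 * n + 2))⁻¹ * (1 - q ^ (2 * n + 2)) * (1 - k0 ^ 2 * q ^ (2 * n + 2))) •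
          w (2 * n + 1)
        + (k0 + k0⁻¹ - k0⁻¹ * (q ^ (2 * n + 2))⁻¹) • w (2 * n + 2) ∧
      X3 (w (2 * n + 1)) =
        (-(k3⁻¹ * (k0 * k1 * k3 * q ^ (2 * n + 1) - k2)
          * (k0 * k1 * k3 * q ^ (2 * n + 1) - k2⁻¹))) • w (2 * n)
        + k3⁻¹ • w (2 * n + 1) + k3 • w (2 * n + 2) ∧
      X3 (w (2 * n + 2)) = k3 • w (2 * n + 2) := by
    induction n with
    | zero => simpa [pow_two] using base
    | succ n ih =>
      obtain ⟨i1, -, -, i4, -, i6⟩ := ih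
      have := h.step hq hk0 hk1 hk2 hk3 (pow_ne_zero (2 * n + 2) hq) i1 i4 i6 (x1e n)
        (by rw [pw2, pw3]; exact x0o (n + 1))
      rw [pw2, pw3] at this
      exact this
  refine ⟨by rw [w0, hx0], fun n => (all n).2.2.2.1, x0o, x1z, x1e, fun n => (all n).1,
    fun n => (all n).2.1, fun n => (all n).2.2.1, fun n => ?_, fun n => (all n).2.2.2.2.1⟩
  cases n with
  | zero => rw [mul_zero, w0, hx3]
  | succ n => exact (all n).2.2.2.2.2

/-- A linear map that intertwines the first two operators carries a sequence with the relations of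
`M` to the sequence `wseq` generated by the image of its first term. -/
lemma MRel.map_eq_wseq {V' : Type*} [AddCommGroup V'] [Module F V'] {w : ℕ → V}
    (h : MRel q k0 k1 k2 k3 X0 X1 X2 X3 w) (hq : q ≠ 0) (hk0 : k0 ≠ 0) (hk1 : k1 ≠ 0)
    {Y0 Y1 : Module.End F V'} (φ : V →ₗ[F] V')
    (h0 : ∀ x, φ (X0 x) = Y0 (φ x)) (h1 : ∀ x, φ (X1 x) = Y1 (φ x)) (i : ℕ) :
    φ (w i) = wseq q k0 k1 Y0 Y1 (φ (w 0)) i := by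
  induction i using Nat.strong_induction_on with
  | _ i ih =>
    match i, ih with
    | 0, _ => rw [wseq]
    | 1, _ =>
      rw [wseq, ← h1, h.x1z, map_add, map_smul, map_smul]
      match_scalars <;> field_simp <;> ring
    | i + 2, ih =>
      rcases Nat.even_or_odd' i with ⟨n, rfl | rfl⟩
      · have : q ^ (2 * n + 2) ≠ 0 := pow_ne_zero _ hq
        rw [wseq_even, ← ih (2 * n + 1) (by omega), ← h0, h.x0o, map_smul, map_sub]
        match_scalars <;> field_simp <;> ring
      · rw [show 2 * n + 1 + 2 = 2 * n + 3 by ring, wseq_odd, ← ih (2 * n + 1) (by omega),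
          ← ih (2 * n + 2) (by omega), ← h1, h.x1e]
        simp only [map_add, map_smul]
        match_scalars <;> field_simp <;> ring

end Abstract

/-! ### The defining basis of `O` and the truncation -/

section Concrete

variable {q k0 k1 k2 k3 : F} {d : ℕ}

lemma e_apply (i : ℕ) (j : Fin (d + 1)) : e F d i j = if i = j.val then 1 else 0 := by
  unfold e
  split_ifs with h1 h2 h2
  · subst h2; simp
  · exact Pi.single_eq_of_ne (fun h => h2 (by rw [h])) _
  · exact absurd j.isLt (h2 ▸ h1)
  · rfl

lemma e_eq_zero {i : ℕ} (h : d < i) : e F d i = 0 := by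
  unfold e; rw [dif_neg (by omega)]

lemma e_eq_basisFun (i : Fin (d + 1)) : e F d i = Pi.basisFun F (Fin (d + 1)) i := by
  rw [Pi.basisFun_apply, e, dif_pos i.isLt]

lemma span_e : Submodule.span F (Set.range (e F d)) = ⊤ := by
  refine top_unique ?_
  rw [← (Pi.basisFun F (Fin (d + 1))).span_eq]
  refine Submodule.span_mono ?_
  rintro _ ⟨i, rfl⟩
  exact ⟨i, e_eq_basisFun i⟩

/-- The defining basis of `O(k₀,k₁,k₂,k₃)`, extended by `0`, satisfies the relations of `M` at every
index. At index `d + 1` the coefficient of `e d` contains the factor `k₀k₁k₃q^{d+1} - k₂⁻¹`, which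
vanishes because `k₀k₁k₂k₃ = q^{-d-1}`. -/
lemma IsO.mrel (hq : q ≠ 0) (hd : Even d) (hk0 : k0 ≠ 0) (hk1 : k1 ≠ 0) (hk2 : k2 ≠ 0)
    (hk3 : k3 ≠ 0) (hpar : k0 * k1 * k2 * k3 = (q ^ (d + 1))⁻¹)
    {T : ZMod 4 → Module.End F (Fin (d + 1) → F)} (hT : IsO q k0 k1 k2 k3 d T) :
    MRel q k0 k1 k2 k3 (T 0) (T 1) (T 2) (T 3) (e F d) := by
  obtain ⟨t0e, t0o, t0z, t1e, t1o, t1z, t1d, t2e, t2o, t2d, t3e, t3o⟩ := hT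
  have hd' : q ^ (d + 1) ≠ 0 := pow_ne_zero _ hq
  have hc : k0 * k1 * k3 = (k2 * q ^ (d + 1))⁻¹ := by
    rw [mul_inv, ← hpar]; field_simp
  have hc' : k0⁻¹ * k1⁻¹ * k3⁻¹ = k2 * q ^ (d + 1) := by
    rw [← inv_inj, ← hc, mul_inv, mul_inv, inv_inv, inv_inv, inv_inv]
  have hc'' : (k2 * q ^ (d + 1))⁻¹ * q ^ (d + 1) = k2⁻¹ := by field_simp
  obtain ⟨m, rfl⟩ := even_iff_two_dvd.mp hd
  refine ⟨t0z, fun n => ?_, fun n => ?_, t1z, fun n => ?_, fun n => ?_, fun n => ?_, fun n => ?_,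
    fun n => ?_, fun n => ?_⟩
  · by_cases h : n + 1 ≤ m
    · exact t0e _ (by simp [parity_simps]) (by omega) (by omega)
    · simp [e_eq_zero (F := F) (show 2 * m < 2 * n + 1 by omega),
        e_eq_zero (F := F) (show 2 * m < 2 * n + 2 by omega)]
  · by_cases h : n + 1 ≤ m
    · exact t0o _ (by simp [parity_simps]) (by omega)
    · simp [e_eq_zero (F := F) (show 2 * m < 2 * n + 1 by omega),
        e_eq_zero (F := F) (show 2 * m < 2 * n + 2 by omega)]
  · rcases lt_trichotomy (n + 1) m with h | h | h
    · exact t1e _ (by simp [parity_simps]) (by omega) (by omega)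
    · subst h
      rw [e_eq_zero (F := F) (show 2 * (n + 1) < 2 * n + 3 by omega), smul_zero, add_zero]
      exact t1d
    · simp [e_eq_zero (F := F) (show 2 * m < 2 * n + 1 by omega),
        e_eq_zero (F := F) (show 2 * m < 2 * n + 2 by omega),
        e_eq_zero (F := F) (show 2 * m < 2 * n + 3 by omega)]
  · by_cases h : n + 1 ≤ m
    · exact t1o _ (by simp [parity_simps]) (by omega)
    · simp [e_eq_zero (F := F) (show 2 * m < 2 * n + 1 by omega)]
  · rw [hc']
    rcases lt_trichotomy n m with h | rfl | h
    · rw [t2e _ (by simp) (by omega)]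
      obtain ⟨r, rfl⟩ := Nat.exists_eq_add_of_le h.le
      rw [show 2 * (n + r) - 2 * n = 2 * r by omega]
      congr 1
      have : q ^ (2 * n + 1) ≠ 0 := pow_ne_zero _ hq
      field_simp; ring
    · rw [t2d, e_eq_zero (F := F) (show 2 * n < 2 * n + 1 by omega), sub_zero]
      congr 1
      field_simp
    · simp [e_eq_zero (F := F) (show 2 * m < 2 * n by omega),
        e_eq_zero (F := F) (show 2 * m < 2 * n + 1 by omega)]
  · rw [hc, hc']
    rcases lt_trichotomy n m with h | rfl | h
    · rw [t2o _ (by simp [parity_simps]) (by omega)]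
      obtain ⟨r, rfl⟩ := Nat.exists_eq_add_of_le h.le
      rw [show 2 * (n + r) - (2 * n + 1) + 1 = 2 * r by omega,
        show 2 * (n + r) + 1 - (2 * n + 1) = 2 * r by omega,
        show q ^ (2 * (n + r) + 1) = q ^ (2 * r) * q ^ (2 * n + 1) by ring]
      have : q ^ (2 * n + 1) ≠ 0 := pow_ne_zero _ hq
      have : q ^ (2 * r) ≠ 0 := pow_ne_zero _ hq
      generalize q ^ (2 * n + 1) = Q at *
      generalize q ^ (2 * r) = R at *
      rw [show 2 * n + 1 - 1 = 2 * n by omega]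
      match_scalars <;> field_simp <;> ring
    · rw [e_eq_zero (F := F) (show 2 * n < 2 * n + 1 by omega), map_zero, smul_zero, add_zero,
        hc'', sub_self, mul_zero, zero_smul]
    · simp [e_eq_zero (F := F) (show 2 * m < 2 * n by omega),
        e_eq_zero (F := F) (show 2 * m < 2 * n + 1 by omega)]
  · by_cases h : n ≤ m
    · exact t3e _ (by simp) (by omega)
    · simp [e_eq_zero (F := F) (show 2 * m < 2 * n by omega)]
  · rw [hc]
    rcases lt_trichotomy n m with h | rfl | h
    · rw [t3o _ (by simp [parity_simps]) (by omega)]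
      obtain ⟨r, rfl⟩ := Nat.exists_eq_add_of_le h.le
      rw [show 2 * (n + r) + 1 - (2 * n + 1) = 2 * r by omega,
        show q ^ (2 * (n + r) + 1) = q ^ (2 * r) * q ^ (2 * n + 1) by ring]
      have : q ^ (2 * n + 1) ≠ 0 := pow_ne_zero _ hq
      have : q ^ (2 * r) ≠ 0 := pow_ne_zero _ hq
      generalize q ^ (2 * n + 1) = Q at *
      generalize q ^ (2 * r) = R at *
      rw [show 2 * n + 1 - 1 = 2 * n by omega, show 2 * n + 1 + 1 = 2 * n + 2 by omega]
      match_scalars <;> field_simp <;> ring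
    · rw [e_eq_zero (F := F) (show 2 * n < 2 * n + 1 by omega),
        e_eq_zero (F := F) (show 2 * n < 2 * n + 2 by omega), map_zero, smul_zero, smul_zero,
        add_zero, add_zero,
        hc'', sub_self, mul_zero, neg_zero, zero_smul]
    · simp [e_eq_zero (F := F) (show 2 * m < 2 * n by omega),
        e_eq_zero (F := F) (show 2 * m < 2 * n + 1 by omega),
        e_eq_zero (F := F) (show 2 * m < 2 * n + 2 by omega)]

variable {S0 S1 S2 S3 : Module.End F (Fin (d + 1) → F)}

/-- The image of `1 - k₂⁻¹ S₁` lies in the span `W` of the odd basis vectors, and `W` contains no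
nonzero eigenvector of `S₀`: for odd `i`, the coordinate of `S₀ y` at `i + 1` is a nonzero multiple
of the coordinate of `y ∈ W` at `i`, while an eigenvector in `W` has zero coordinate at `i + 1`. -/
lemma eq_zero_of_eigen (h : MRel q k1 k2 k3 k0 S0 S1 S2 S3 (e F d)) (hq : q ≠ 0)
    (hk1 : k1 ≠ 0) (hk2 : k2 ≠ 0) (hd : Even d) {x z : Fin (d + 1) → F}
    (hzx : z = x - k2⁻¹ • S1 x) (hz : S0 z = k1⁻¹ • z) : z = 0 := by
  set W := Submodule.span F (Set.range fun n : ℕ => e F d (2 * n + 1)) with hW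
  have odd_mem (n : ℕ) : e F d (2 * n + 1) ∈ W := Submodule.subset_span ⟨n, rfl⟩
  have hx : ∀ x, x - k2⁻¹ • S1 x ∈ W := by
    have : (⊤ : Submodule F (Fin (d + 1) → F)) ≤ W.comap (1 - k2⁻¹ • S1) := by
      rw [← span_e, Submodule.span_le]
      rintro _ ⟨i, rfl⟩
      change e F d i - k2⁻¹ • S1 (e F d i) ∈ W
      rcases Nat.even_or_odd' i with ⟨n, rfl | rfl⟩
      · cases n with
        | zero =>
          have : e F d 0 - k2⁻¹ • S1 (e F d 0) = (-k2⁻¹ * k2⁻¹) • e F d (2 * 0 + 1) := by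
            rw [h.x1z]; match_scalars <;> field_simp <;> ring
          rw [mul_zero, this]
          exact W.smul_mem _ (odd_mem 0)
        | succ n =>
          have : e F d (2 * n + 2) - k2⁻¹ • S1 (e F d (2 * n + 2)) =
              ((1 - q ^ (2 * n + 2)) * (1 - k1 ^ 2 * q ^ (2 * n + 2))) • e F d (2 * n + 1)
              + (-k2⁻¹ * k2⁻¹) • e F d (2 * (n + 1) + 1) := by
            rw [h.x1e]; match_scalars <;> field_simp <;> ring
          rw [show 2 * (n + 1) = 2 * n + 2 by ring, this]
          exact W.add_mem (W.smul_mem _ (odd_mem n)) (W.smul_mem _ (odd_mem _))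
      · rw [h.x1o]
        exact W.sub_mem (odd_mem n) (W.smul_mem _ (W.smul_mem _ (odd_mem n)))
    exact fun x => this (Submodule.mem_top (x := x))
  have hzW : z ∈ W := hzx ▸ hx x
  -- Elements of `W` have no even coordinates, and for odd `i` the `(i + 1)`-st coordinate of `S₀ y`
  -- comes from the `i`-th coordinate of `y` alone.
  have heven : ∀ y ∈ W, ∀ j : Fin (d + 1), Even j.val → y j = 0 := by
    intro y hy j hj
    induction hy using Submodule.span_induction with
    | mem y hy =>
      obtain ⟨n, rfl⟩ := hy
      change e F d (2 * n + 1) j = 0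
      rw [e_apply, if_neg]
      intro hn
      rw [← hn] at hj
      simp [parity_simps] at hj
    | zero => rfl
    | add y y' _ _ h1 h2 => rw [Pi.add_apply, h1, h2, add_zero]
    | smul c y _ h1 => rw [Pi.smul_apply, h1, smul_zero]
  have hS0 : ∀ y ∈ W, ∀ i j : Fin (d + 1), Odd i.val → j.val = i.val + 1 →
      S0 y j = -(k1⁻¹ * (q ^ j.val)⁻¹) * y i := by
    intro y hy i j hi hij
    induction hy using Submodule.span_induction with
    | mem y hy =>
      obtain ⟨n, rfl⟩ := hy
      obtain ⟨r, hr⟩ := hi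
      simp only [h.x0o, Pi.smul_apply, Pi.sub_apply, e_apply, smul_eq_mul, hij, hr]
      by_cases hn : n = r
      · subst hn; simp
      · rw [if_neg (by omega), if_neg (by omega), if_neg (by omega)]; simp
    | zero => simp
    | add y y' _ _ h1 h2 => rw [map_add, Pi.add_apply, h1, h2, Pi.add_apply, mul_add]
    | smul c y _ h1 =>
      rw [map_smul, Pi.smul_apply, h1, Pi.smul_apply, smul_eq_mul, smul_eq_mul]; ring
  funext i
  rcases Nat.even_or_odd i.val with hi | hi
  · exact heven z hzW i hi
  · have hlt : i.val + 1 < d + 1 := by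
      have := i.isLt
      rcases hd with ⟨m, rfl⟩
      rcases hi with ⟨r, hr⟩
      omega
    have h1 := hS0 z hzW i ⟨i.val + 1, hlt⟩ hi rfl
    rw [hz, Pi.smul_apply, heven z hzW _ (by simpa [parity_simps] using hi), smul_zero] at h1
    have h2 : -(k1⁻¹ * (q ^ (i.val + 1))⁻¹) ≠ 0 :=
      neg_ne_zero.mpr (mul_ne_zero (inv_ne_zero hk1) (inv_ne_zero (pow_ne_zero _ hq)))
    exact (mul_eq_zero.mp h1.symm).resolve_left h2

/-! ### Leading coefficients -/

/-- The span of the basis vectors `e j` with `j ≥ m` (it is zero when `m > d`). -/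
def U (F : Type*) [Field F] (d m : ℕ) : Submodule F (Fin (d + 1) → F) :=
  Submodule.span F (Set.range fun j : ℕ => e F d (m + j))

lemma e_mem_U {m j : ℕ} (h : m ≤ j) : e F d j ∈ U F d m :=
  Submodule.subset_span ⟨j - m, by simp only [Nat.add_sub_cancel' h]⟩

lemma U_anti {m n : ℕ} (h : m ≤ n) : U F d n ≤ U F d m := by
  refine Submodule.span_le.mpr ?_
  rintro _ ⟨j, rfl⟩
  exact e_mem_U (by omega)

lemma map_mem_U {m : ℕ} {X : Module.End F (Fin (d + 1) → F)}
    (h : ∀ j, m ≤ j → X (e F d j) ∈ U F d m) {x : Fin (d + 1) → F} (hx : x ∈ U F d m) :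
    X x ∈ U F d m := by
  have : U F d m ≤ (U F d m).comap X := by
    refine Submodule.span_le.mpr ?_
    rintro _ ⟨j, rfl⟩
    exact h _ (by omega)
  exact this hx

lemma apply_eq_zero_of_mem_U {m : ℕ} {x : Fin (d + 1) → F} (hx : x ∈ U F d m)
    (i : Fin (d + 1)) (hi : i.val < m) : x i = 0 := by
  induction hx using Submodule.span_induction with
  | mem y hy =>
    obtain ⟨n, rfl⟩ := hy
    change e F d (m + n) i = 0
    rw [e_apply, if_neg (by omega)]
  | zero => rfl
  | add y y' _ _ h1 h2 => rw [Pi.add_apply, h1, h2, add_zero]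
  | smul c y _ h1 => rw [Pi.smul_apply, h1, smul_zero]

lemma MRel.X0_mem_U (h : MRel q k1 k2 k3 k0 S0 S1 S2 S3 (e F d)) (r : ℕ)
    {x : Fin (d + 1) → F} (hx : x ∈ U F d (2 * r + 1)) : S0 x ∈ U F d (2 * r + 1) := by
  refine map_mem_U (fun j hj => ?_) hx
  rcases Nat.even_or_odd' j with ⟨n, rfl | rfl⟩
  · obtain ⟨n, rfl⟩ : ∃ p, n = p + 1 := ⟨n - 1, by omega⟩
    rw [show 2 * (n + 1) = 2 * n + 2 by ring, h.x0e]
    exact add_mem (Submodule.smul_mem _ _ (e_mem_U (by omega)))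
      (Submodule.smul_mem _ _ (e_mem_U (by omega)))
  · rw [h.x0o]
    exact Submodule.smul_mem _ _ (sub_mem (e_mem_U (by omega)) (e_mem_U (by omega)))

lemma MRel.X3_mem_U (h : MRel q k1 k2 k3 k0 S0 S1 S2 S3 (e F d)) (r : ℕ)
    {x : Fin (d + 1) → F} (hx : x ∈ U F d (2 * r)) : S3 x ∈ U F d (2 * r) := by
  refine map_mem_U (fun j hj => ?_) hx
  rcases Nat.even_or_odd' j with ⟨n, rfl | rfl⟩
  · rw [h.x3e]
    exact Submodule.smul_mem _ _ (e_mem_U (by omega))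
  · rw [h.x3o]
    exact add_mem (add_mem (Submodule.smul_mem _ _ (e_mem_U (by omega)))
      (Submodule.smul_mem _ _ (e_mem_U (by omega)))) (Submodule.smul_mem _ _ (e_mem_U (by omega)))

/-- Passing from `w_{2p}` to `w_{2p+1}` in the recursion for `(S₃,S₀,S₁,S₂)`: if `x` has leading term
`a u_{2r+2}`, then the next vector has leading term at `u_{2r+1}`, with coefficient read off from
`S₀ u_{2r+2}`. The vector `y` is the preceding term `w_{2p-1}`, whose leading term lies too high
to contribute. -/
lemma MRel.stepA (h : MRel q k1 k2 k3 k0 S0 S1 S2 S3 (e F d)) (hk1 : k1 ≠ 0) {r : ℕ} {a t : F}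
    {x y : Fin (d + 1) → F} (hx : x - a • e F d (2 * r + 2) ∈ U F d (2 * r + 3))
    (hy : y ∈ U F d (2 * r + 2)) :
    k1 • (S0 x - k1 • x + t • y)
      - (a * ((q ^ (2 * r + 2))⁻¹ * (1 - q ^ (2 * r + 2)) * (1 - k1 ^ 2 * q ^ (2 * r + 2)))) •
        e F d (2 * r + 1) ∈ U F d (2 * r + 2) := by
  have h1 := h.X0_mem_U (r + 1) hx
  rw [map_sub, map_smul, h.x0e] at h1
  have h2 : S0 x - a • _ ∈ U F d (2 * r + 2) := U_anti (by omega) h1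
  have h3 : x ∈ U F d (2 * r + 2) := by
    have := add_mem (U_anti (show 2 * r + 2 ≤ 2 * r + 3 by omega) hx)
      (Submodule.smul_mem _ a (e_mem_U (F := F) (d := d) (le_refl (2 * r + 2))))
    rwa [sub_add_cancel] at this
  have h4 := (U F d (2 * r + 2)).smul_mem k1 (add_mem (add_mem (sub_mem h2
    ((U F d (2 * r + 2)).smul_mem k1 h3)) ((U F d (2 * r + 2)).smul_mem t hy))
    ((U F d (2 * r + 2)).smul_mem (a * (k1 + k1⁻¹ - k1⁻¹ * (q ^ (2 * r + 2))⁻¹))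
      (e_mem_U (le_refl (2 * r + 2)))))
  convert h4 using 1
  match_scalars <;> field_simp <;> ring

/-- Passing from `w_{2p+1}` to `w_{2p+2}` in the recursion for `(S₃,S₀,S₁,S₂)`, where `t = q^{2p+2}`:
the leading term moves from `u_{2r+1}` to `u_{2r}`, with coefficient read off from `S₃ u_{2r+1}`. -/
lemma MRel.stepB (h : MRel q k1 k2 k3 k0 S0 S1 S2 S3 (e F d)) (hk0 : k0 ≠ 0) {r : ℕ} {a t : F}
    {x : Fin (d + 1) → F} (hx : x - a • e F d (2 * r + 1) ∈ U F d (2 * r + 2)) :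
    x - (k0 * t) • S3 x
      - (a * (t * (k1 * k2 * k0 * q ^ (2 * r + 1) - k3)
        * (k1 * k2 * k0 * q ^ (2 * r + 1) - k3⁻¹))) • e F d (2 * r) ∈ U F d (2 * r + 1) := by
  have h1 := h.X3_mem_U (r + 1) hx
  rw [map_sub, map_smul, h.x3o] at h1
  have h2 : S3 x - a • _ ∈ U F d (2 * r + 1) := U_anti (by omega) h1
  have h3 : x ∈ U F d (2 * r + 1) := by
    have := add_mem (U_anti (show 2 * r + 1 ≤ 2 * r + 2 by omega) hx)
      (Submodule.smul_mem _ a (e_mem_U (F := F) (d := d) (le_refl (2 * r + 1))))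
    rwa [sub_add_cancel] at this
  have h4 := sub_mem (sub_mem h3 ((U F d (2 * r + 1)).smul_mem (k0 * t) h2))
    ((U F d (2 * r + 1)).smul_mem (k0 * t * a) (add_mem
      ((U F d (2 * r + 1)).smul_mem k0⁻¹ (e_mem_U (le_refl (2 * r + 1))))
      ((U F d (2 * r + 1)).smul_mem k0 (e_mem_U (show 2 * r + 1 ≤ 2 * r + 2 by omega)))))
  convert h4 using 1
  match_scalars <;> field_simp <;> ring

/-- The factor by which the leading coefficient changes from `w_i` to `w_{i+1}`, that is, from the
coefficient of `u_{d-i}` to that of `u_{d-i-1}`; the two parities come from `MRel.stepA` and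
`MRel.stepB`. Meaningful for `i < d`. -/
def sc (q k1 k3 : F) (d i : ℕ) : F :=
  if Even i then (q ^ (d - i))⁻¹ * (1 - q ^ (d - i)) * (1 - k1 ^ 2 * q ^ (d - i))
  else q ^ (i + 1) * (k3⁻¹ * (q ^ (i + 1))⁻¹ - k3) * (k3⁻¹ * (q ^ (i + 1))⁻¹ - k3⁻¹)

/-- For `n ≤ d`, the vector `wₙ` generated from `u_d` has leading term
`(∏_{i<n} scᵢ) u_{d-n}`, modulo the `u_j` with `j > d - n`. -/
lemma MRel.lead (h : MRel q k1 k2 k3 k0 S0 S1 S2 S3 (e F d)) (hq : q ≠ 0) (hd : Even d)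
    (hk0 : k0 ≠ 0) (hk1 : k1 ≠ 0) (hk2 : k2 ≠ 0) (hk3 : k3 ≠ 0)
    (hpar : k0 * k1 * k2 * k3 = (q ^ (d + 1))⁻¹) (n : ℕ) (hn : n ≤ d) :
    wseq q k0 k1 S3 S0 (e F d d) n - (∏ i ∈ Finset.range n, sc q k1 k3 d i) • e F d (d - n)
      ∈ U F d (d - n + 1) := by
  have weak {x : Fin (d + 1) → F} {a : F} {m : ℕ} (hx : x - a • e F d m ∈ U F d (m + 1)) :
      x ∈ U F d m := by
    have := add_mem (U_anti (Nat.le_succ m) hx)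
      (Submodule.smul_mem _ a (e_mem_U (F := F) (d := d) le_rfl))
    rwa [sub_add_cancel] at this
  have hd' : q ^ (d + 1) ≠ 0 := pow_ne_zero _ hq
  have hc : k1 * k2 * k0 = (k3 * q ^ (d + 1))⁻¹ := by
    rw [mul_inv, ← hpar]; field_simp
  obtain ⟨m, rfl⟩ := even_iff_two_dvd.mp hd
  induction n using Nat.strong_induction_on with
  | _ n ih =>
    match n, ih, hn with
    | 0, _, _ => simp [wseq]
    | 1, ih, hn =>
      obtain ⟨r, rfl⟩ : ∃ r, m = r + 1 := ⟨m - 1, by omega⟩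
      have h0 := ih 0 (by omega) (by omega)
      have := h.stepA hk1 (r := r) (t := 0) (y := 0) h0 (zero_mem _)
      rw [Finset.prod_range_succ, sc, if_pos (by simp)]
      simp only [Finset.range_zero, Finset.prod_empty, one_mul, smul_zero, add_zero] at this
      simp only [wseq, Finset.range_zero, Finset.prod_empty, one_mul]
      exact this
    | i + 2, ih, hn =>
      rcases Nat.even_or_odd' i with ⟨p, rfl | rfl⟩
      · obtain ⟨r, rfl⟩ : ∃ r, m = r + p + 1 := ⟨m - p - 1, by omega⟩
        have h0 := ih (2 * p + 1) (by omega) (by omega)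
        rw [show 2 * (r + p + 1) - (2 * p + 1) = 2 * r + 1 by omega] at h0
        have := h.stepB hk0 (t := q ^ (2 * p + 2)) h0
        rw [wseq_even, Finset.prod_range_succ, sc, if_neg (by simp [parity_simps]),
          show 2 * (r + p + 1) - (2 * p + 2) = 2 * r by omega]
        have hcq : k1 * k2 * k0 * q ^ (2 * r + 1) = k3⁻¹ * (q ^ (2 * p + 1 + 1))⁻¹ := by
          rw [hc, show 2 * (r + p + 1) + 1 = (2 * r + 1) + (2 * p + 1 + 1) by ring, pow_add]
          have : q ^ (2 * r + 1) ≠ 0 := pow_ne_zero _ hq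
          field_simp
        rw [hcq] at this
        exact this
      · obtain ⟨r, rfl⟩ : ∃ r, m = r + p + 2 := ⟨m - p - 2, by omega⟩
        have h0 := ih (2 * p + 2) (by omega) (by omega)
        have h1 := weak (ih (2 * p + 1) (by omega) (by omega))
        rw [show 2 * (r + p + 2) - (2 * p + 2) = 2 * r + 2 by omega] at h0
        have := h.stepA hk1 (t := k1 * (1 - q ^ (2 * p + 2)) * (1 - k0 ^ 2 * q ^ (2 * p + 2)))
          h0 (U_anti (by omega) h1)
        rw [show 2 * p + 1 + 2 = 2 * p + 3 by ring, wseq_odd, Finset.prod_range_succ, sc,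
          if_pos (by simp [parity_simps]),
          show 2 * (r + p + 2) - (2 * p + 2) = 2 * r + 2 by omega,
          show 2 * (r + p + 2) - (2 * p + 3) = 2 * r + 1 by omega]
        exact this

/-- The multipliers with even `i` give the conditions at the exponent `d - i`, those with odd `i`
the conditions at `i + 1`; both exponents run over the even numbers from `2` to `d`. -/
lemma sc_ne_zero_iff (hq : q ≠ 0) (hd : Even d) (hk3 : k3 ≠ 0) :
    (∀ n < d, sc q k1 k3 d n ≠ 0) ↔ ∀ i : ℕ, Even i → 2 ≤ i → i ≤ d →
      q ^ i ≠ 1 ∧ k1 ^ 2 ≠ (q ^ i)⁻¹ ∧ k3 ^ 2 ≠ (q ^ i)⁻¹ := by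
  have even_iff (j : ℕ) : (q ^ j)⁻¹ * (1 - q ^ j) * (1 - k1 ^ 2 * q ^ j) ≠ 0 ↔
      q ^ j ≠ 1 ∧ k1 ^ 2 ≠ (q ^ j)⁻¹ := by
    have : q ^ j ≠ 0 := pow_ne_zero _ hq
    rw [mul_ne_zero_iff, mul_ne_zero_iff, sub_ne_zero, sub_ne_zero, ne_comm (a := (1 : F)),
      ne_comm (a := (1 : F)), ne_eq (k1 ^ 2), ← mul_eq_one_iff_eq_inv₀ this]
    simp [this]
  have odd_iff (j : ℕ) : q ^ j * (k3⁻¹ * (q ^ j)⁻¹ - k3) * (k3⁻¹ * (q ^ j)⁻¹ - k3⁻¹) ≠ 0 ↔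
      k3 ^ 2 ≠ (q ^ j)⁻¹ ∧ q ^ j ≠ 1 := by
    have : q ^ j ≠ 0 := pow_ne_zero _ hq
    rw [mul_ne_zero_iff, mul_ne_zero_iff, sub_ne_zero, sub_ne_zero]
    have h1 : k3⁻¹ * (q ^ j)⁻¹ = k3 ↔ k3 ^ 2 = (q ^ j)⁻¹ := by
      rw [inv_mul_eq_iff_eq_mul₀ hk3, pow_two, eq_comm]
    have h2 : k3⁻¹ * (q ^ j)⁻¹ = k3⁻¹ ↔ q ^ j = 1 := by
      rw [mul_eq_left₀ (inv_ne_zero hk3), inv_eq_one]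
    simp only [ne_eq, h1, h2, this, not_false_eq_true, true_and]
  constructor
  · intro h i hi h2 hid
    have h1 := h (d - i) (by omega)
    have h3 := h (i - 1) (by omega)
    rw [sc, if_pos (by rw [Nat.even_sub hid]; simp [hi, hd]), Nat.sub_sub_self hid,
      even_iff] at h1
    rw [sc, if_neg (by rw [Nat.even_sub (by omega)]; simp [hi]), Nat.sub_add_cancel (by omega),
      odd_iff] at h3
    exact ⟨h1.1, h1.2, h3.1⟩
  · intro h n hn
    rw [sc]
    split_ifs with hne
    · have hs : Even (d - n) := by rw [Nat.even_sub hn.le]; simp [hne, hd]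
      rw [even_iff]
      have := h (d - n) hs (by rcases hs with ⟨t, ht⟩; omega) (by omega)
      exact ⟨this.1, this.2.1⟩
    · rw [odd_iff]
      have ho : Even (n + 1) := by simpa [parity_simps] using hne
      have := h (n + 1) ho (by rcases ho with ⟨t, ht⟩; omega) (by omega)
      exact ⟨this.2.2, this.1⟩

/-- A map sending `eₙ` to `(∏_{i<n} sᵢ) e_{d-n}` plus higher terms has an upper triangular matrix after
its rows are reversed, with the partial products on the diagonal; the last of these contains all
the `sᵢ`. -/
lemma bijective_iff (φ : (Fin (d + 1) → F) →ₗ[F] (Fin (d + 1) → F)) (s : ℕ → F)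
    (h : ∀ n ≤ d, φ (e F d n) - (∏ i ∈ Finset.range n, s i) • e F d (d - n) ∈ U F d (d - n + 1)) :
    Function.Bijective φ ↔ ∀ n < d, s n ≠ 0 := by
  have entry (i j : Fin (d + 1)) : LinearMap.toMatrix' φ i j = φ (e F d j) i := by
    rw [LinearMap.toMatrix'_apply, e_eq_basisFun, Pi.basisFun_apply]
  have hz (i j : Fin (d + 1)) (hij : i.val ≤ d - j.val) :
      φ (e F d j) i = (∏ i ∈ Finset.range j, s i) * e F d (d - j) i := by
    have := apply_eq_zero_of_mem_U (h j (by omega)) i (by omega)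
    rw [Pi.sub_apply, Pi.smul_apply, sub_eq_zero] at this
    exact this
  have htri : ((LinearMap.toMatrix' φ).submatrix Fin.revPerm id).BlockTriangular id := by
    intro i j hij
    have hij' : j.val < i.val := hij
    rw [Matrix.submatrix_apply, entry, id, hz _ _ (by simp [Fin.revPerm, Fin.val_rev]; omega),
      e_apply, if_neg (by simp [Fin.revPerm, Fin.val_rev]; omega), mul_zero]
  have hdiag (j : Fin (d + 1)) : (LinearMap.toMatrix' φ).submatrix Fin.revPerm id j j =
      ∏ i ∈ Finset.range j, s i := by
    rw [Matrix.submatrix_apply, entry, id, hz _ _ (by simp [Fin.revPerm, Fin.val_rev]),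
      e_apply, if_pos (by simp [Fin.revPerm, Fin.val_rev]), mul_one]
  rw [← Module.End.isUnit_iff, ← LinearMap.isUnit_toMatrix'_iff,
    ← Matrix.isUnit_submatrix_equiv Fin.revPerm (Equiv.refl _), Matrix.isUnit_iff_isUnit_det,
    Equiv.coe_refl, Matrix.det_of_isUpperTriangular htri, isUnit_iff_ne_zero,
    Finset.prod_ne_zero_iff]
  simp only [hdiag, Finset.prod_ne_zero_iff, Finset.mem_univ, Finset.mem_range, true_imp_iff]
  exact ⟨fun h n hn => h (Fin.last d) n hn, fun h j n hn => h n (by omega)⟩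

/-! ### The intertwiner -/

/-- The linear map `vᵢ ↦ wᵢ` is the required intertwiner: the relations of `M` hold on both sides,
and `wᵢ = 0` for `i > d` makes them match the truncated basis `vᵢ`. -/
lemma exists_intertwiner {T0 T1 T2 T3 : Module.End F (Fin (d + 1) → F)}
    (hT : MRel q k0 k1 k2 k3 T0 T1 T2 T3 (e F d))
    (hS : MRel q k1 k2 k3 k0 S0 S1 S2 S3 (e F d)) (hq : q ≠ 0) (hd : Even d)
    (hk0 : k0 ≠ 0) (hk1 : k1 ≠ 0) (hk2 : k2 ≠ 0) (hk3 : k3 ≠ 0)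
    (hpar : k0 * k1 * k2 * k3 = (q ^ (d + 1))⁻¹) :
    ∃ φ : (Fin (d + 1) → F) →ₗ[F] (Fin (d + 1) → F),
      (∀ x, φ (T0 x) = S3 (φ x)) ∧ (∀ x, φ (T1 x) = S0 (φ x)) ∧ (∀ x, φ (T2 x) = S1 (φ x)) ∧
      (∀ x, φ (T3 x) = S2 (φ x)) ∧ φ (e F d 0) = e F d d := by
  have hd' : q ^ (d + 1) ≠ 0 := pow_ne_zero _ hq
  obtain ⟨m, rfl⟩ := even_iff_two_dvd.mp hd
  have hHQ := (hS.toHQ hq hk1 hk2 hk3 hk0 span_e).rotate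
  have hx0 : S3 (e F (2 * m) (2 * m)) = k0 • e F (2 * m) (2 * m) := hS.x3e m
  have hx3 : S2 (e F (2 * m) (2 * m)) = k3 • e F (2 * m) (2 * m) := by
    rw [hS.x2e, e_eq_zero (F := F) (show 2 * m < 2 * m + 1 by omega), sub_zero]
    congr 1
    have : (k1⁻¹ * k2⁻¹ * k0⁻¹ * (k0 * k1 * k2 * k3)) = k3 := by field_simp
    rwa [hpar] at this
  have hw := hHQ.mrel hq hk0 hk1 hk2 hk3 hx0 hx3
  set w := wseq q k0 k1 S3 S0 (e F (2 * m) (2 * m)) with hwdef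
  have w0 : w 0 = e F (2 * m) (2 * m) := by rw [hwdef, wseq]
  have hlast : w (2 * m + 1) = 0 := by
    refine eq_zero_of_eigen hS hq hk1 hk2 hd (x := w (2 * m)) ?_ (hw.x1o m)
    have : (k0⁻¹ * k1⁻¹ * k3⁻¹ * (k0 * k1 * k2 * k3)) = k2 := by field_simp
    rw [hpar] at this
    rw [hw.x2e, this, smul_smul, inv_mul_cancel₀ hk2, one_smul, sub_sub_cancel]
  have hvan : ∀ n, w (2 * (m + n) + 1) = 0 ∧ w (2 * (m + n) + 2) = 0 := by
    intro n
    induction n with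
    | zero => exact ⟨hlast, by rw [add_zero, hwdef, wseq_even, ← hwdef, hlast]; simp⟩
    | succ n ih =>
      have h1 : w (2 * (m + n) + 3) = 0 := by
        rw [hwdef, wseq_odd, ← hwdef, ih.1, ih.2]; simp
      refine ⟨h1, ?_⟩
      rw [hwdef, wseq_even, ← hwdef, show 2 * (m + (n + 1)) + 1 = 2 * (m + n) + 3 by ring, h1]
      simp
  let φ : (Fin (2 * m + 1) → F) →ₗ[F] (Fin (2 * m + 1) → F) :=
    (Pi.basisFun F (Fin (2 * m + 1))).constr F fun i => w i
  have hφ : ∀ i, φ (e F (2 * m) i) = w i := by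
    intro i
    by_cases hi : i < 2 * m + 1
    · have := e_eq_basisFun (F := F) (d := 2 * m) ⟨i, hi⟩
      rw [this, Module.Basis.constr_basis]
    · rw [e_eq_zero (by omega), map_zero]
      rcases Nat.even_or_odd' i with ⟨n, rfl | rfl⟩
      · have := (hvan (n - m - 1)).2
        rw [show 2 * (m + (n - m - 1)) + 2 = 2 * n by omega] at this
        exact this.symm
      · have := (hvan (n - m)).1
        rw [show 2 * (m + (n - m)) + 1 = 2 * n + 1 by omega] at this
        exact this.symm
  have ext (A B : Module.End F (Fin (2 * m + 1) → F))
      (he : ∀ n, φ (A (e F (2 * m) (2 * n))) = B (w (2 * n)))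
      (ho : ∀ n, φ (A (e F (2 * m) (2 * n + 1))) = B (w (2 * n + 1))) (x) :
      φ (A x) = B (φ x) := by
    have : φ ∘ₗ A = B ∘ₗ φ := by
      refine LinearMap.ext_on_range span_e fun i => ?_
      simp only [LinearMap.comp_apply, hφ]
      rcases Nat.even_or_odd' i with ⟨n, rfl | rfl⟩
      exacts [he n, ho n]
    exact LinearMap.congr_fun this x
  refine ⟨φ, ext _ _ (fun n => ?_) (fun n => ?_), ext _ _ (fun n => ?_) (fun n => ?_),
    ext _ _ (fun n => ?_) (fun n => ?_), ext _ _ (fun n => ?_) (fun n => ?_), by rw [hφ, w0]⟩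
  · cases n with
    | zero => rw [mul_zero, hT.x0z, hw.x0z, map_smul, hφ]
    | succ n =>
      rw [show 2 * (n + 1) = 2 * n + 2 by ring, hT.x0e, hw.x0e]
      simp only [map_add, map_smul, hφ]
  · simp only [hT.x0o, hw.x0o, map_smul, map_sub, hφ]
  · cases n with
    | zero => rw [mul_zero, hT.x1z, hw.x1z, map_add, map_smul, map_smul, hφ, hφ]
    | succ n =>
      rw [show 2 * (n + 1) = 2 * n + 2 by ring, hT.x1e, hw.x1e]
      simp only [map_add, map_smul, hφ]
  · simp only [hT.x1o, hw.x1o, map_smul, hφ]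
  · simp only [hT.x2e, hw.x2e, map_smul, map_sub, hφ]
  · simp only [hT.x2o, hw.x2o, map_smul, map_add, hφ]
  · simp only [hT.x3e, hw.x3e, map_smul, hφ]
  · simp only [hT.x3o, hw.x3o, map_smul, map_add, hφ]

end Concrete

/-- there is a unique linear map `O(k₀,k₁,k₂,k₃) → O(k₁,k₂,k₃,k₀)^{3 mod 4}`
intertwining the quadruples and sending `v₀` to `u_d`; it is an isomorphism iff
`q^i ≠ 1`, `k₁² ≠ q^{-i}`, `k₃² ≠ q^{-i}` for all even `i` with `2 ≤ i ≤ d`. -/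
theorem statement16 (q : F) (hq : q ≠ 0) (d : ℕ) (hd : Even d)
    (k0 k1 k2 k3 : F) (hk0 : k0 ≠ 0) (hk1 : k1 ≠ 0) (hk2 : k2 ≠ 0) (hk3 : k3 ≠ 0)
    (hpar : k0 * k1 * k2 * k3 = (q ^ (d + 1))⁻¹)
    (T S : ZMod 4 → Module.End F (Fin (d + 1) → F))
    (hT : IsO q k0 k1 k2 k3 d T) (hS : IsO q k1 k2 k3 k0 d S) :
    (∃! φ : (Fin (d + 1) → F) →ₗ[F] (Fin (d + 1) → F),
      (∀ i x, φ (T i x) = twist S 3 i (φ x)) ∧ φ (e F d 0) = e F d d) ∧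
    (∀ φ : (Fin (d + 1) → F) →ₗ[F] (Fin (d + 1) → F),
      ((∀ i x, φ (T i x) = twist S 3 i (φ x)) ∧ φ (e F d 0) = e F d d) →
      (Function.Bijective φ ↔
        ∀ i : ℕ, Even i → 2 ≤ i → i ≤ d →
          q ^ i ≠ 1 ∧ k1 ^ 2 ≠ (q ^ i)⁻¹ ∧ k3 ^ 2 ≠ (q ^ i)⁻¹)) := by
  have hT' := hT.mrel hq hd hk0 hk1 hk2 hk3 hpar
  have hS' := hS.mrel hq hd hk1 hk2 hk3 hk0 (by rw [← hpar]; ring)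
  have eq_w (φ : (Fin (d + 1) → F) →ₗ[F] (Fin (d + 1) → F))
      (hφ : (∀ i x, φ (T i x) = twist S 3 i (φ x)) ∧ φ (e F d 0) = e F d d) (i : ℕ) :
      φ (e F d i) = wseq q k0 k1 (S 3) (S 0) (e F d d) i := by
    rw [← hφ.2]
    exact hT'.map_eq_wseq hq hk0 hk1 φ (hφ.1 0) (hφ.1 1) i
  refine ⟨?_, fun φ hφ => ?_⟩
  · obtain ⟨φ, h0, h1, h2, h3, hz⟩ :=
      exists_intertwiner hT' hS' hq hd hk0 hk1 hk2 hk3 hpar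
    have hφ : (∀ i x, φ (T i x) = twist S 3 i (φ x)) ∧ φ (e F d 0) = e F d d := by
      refine ⟨fun i => ?_, hz⟩
      fin_cases i
      exacts [h0, h1, h2, h3]
    refine ⟨φ, hφ, fun ψ hψ => LinearMap.ext_on_range span_e fun i => ?_⟩
    rw [eq_w ψ hψ, eq_w φ hφ]
  · rw [← sc_ne_zero_iff hq hd hk3]
    refine bijective_iff φ _ fun n hn => ?_
    rw [eq_w φ hφ]
    exact hS'.lead hq hd hk0 hk1 hk2 hk3 hpar n hn

end DAHA
end
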